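/- Let D ⊆ ℝ[X₁,…,Xₙ]\{0} be a multiplicatively closed set with 1 ∈ D, let E = D⁻¹ℝ[X₁,…,Xₙ], and let S ⊆ ℝ[X₁,…,Xₙ] be finite with K_S ≠ ∅. Assume there exist p ∈ D and an integer k ≥ 1 such that p ≥ 1 on K_S and k·p − (X₁²+⋯+Xₙ²) ≥ 0 on K_S. Then for every linear functional L : E → ℝ with L(T_S^E) ⊆ [0,∞) there exists a positive Borel measure μ on the closed set 𝒳 = closure(K_S \ ⋃_{d∈D} Z(d)) ⊆ ℝⁿ such that μ(𝒳 ∩ Z(d)) = 0 for every d ∈ D and L(f/d) = ∫_𝒳 f(x)/d(x) dμ(x) for every f ∈ ℝ[X₁,…,Xₙ] and d ∈ D (the integrand being defined μ-almost everywhere). -/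

import Mathlib

/-!
The first ingredient is the Positivstellensatz of Krivine and Stengle (`neg_one_mem_of_empty`,
`exists_mul_eq_one_add`). A preordering of `ℝ[X]` without `-1` maps into the nonnegative cone of an
ordered field (`exists_orderedField`), which extends to an ordered field `R` satisfying the
intermediate value theorem for polynomials (`exists_polyIVT_extension`). The finitely many data of a
system of weak polynomial inequalities solved in `R` live in a countable subfield with the same
property; this subfield embeds into the hyperreals over the field of coefficients
(`exists_embedding`), and a hyperreal solution yields a real one (`exists_real_point`).

Let `T` be the preordering `T_S^E`. The Positivstellensatz provides identities `s h = 1 + t` for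
`h = (k + 1) p - |X|²` and for `h = p - 1/2`, with `s, t ∈ T`. From them the elements `1 / w` and
`Xᵢ / w`, for a suitable power `w` of `p`, are bounded by real constants modulo `T`
(`exists_bounded_chart`). They are coordinates `b` with values in a cube of `ℝⁿ⁺¹`, and every
polynomial `F` positive on that cube has `F(b) ∈ T` (`aeval_mem_of_box_pos`). Therefore, for each
`u ∈ E`, the functional `F ↦ L(u² F(b))` is integration against a finite measure `ν_u` on the cube.
If `u P(b) = 1`, comparison of moments gives `ν_1 = P² ν_u`; hence `P` vanishes only on a `ν_1`-null
set, and `∫ F / P² dν_1 = ∫ F dν_u = L(u² F(b))`. Every fraction `f / d` can be written as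
`u² F(b)` in this way, so the push-forward `μ` of `ν_1` under `y ↦ (yᵢ / y₀)` represents `L`, is
concentrated on `K_S` and annihilates each `Z(d)` (`exists_moment_measure`).

Since `D` may be uncountable, it remains to see that `μ` is concentrated on the closure of
`K_S \ ⋃ Z(d)` (`measure_support`). At a zero `a` of `d ∈ D`, the integrability of `d ^ -(n + 1)`
forces the measure of the ball of radius `r` around `a` to be `O(r ^ (n + 1))`, which is negligible
against Lebesgue measure, and the Besicovitch covering theorem shows that the set of all such points
of `K_S` is `μ`-null.
-/

open MvPolynomial MeasureTheory

noncomputable section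

/-- The Euclidean (weak) topology on a real vector space; for finite-dimensional
spaces this is the usual Euclidean topology. -/
def weakTop (V : Type*) [AddCommGroup V] [Module ℝ V] : TopologicalSpace V :=
  ⨅ L : V →ₗ[ℝ] ℝ, TopologicalSpace.induced L inferInstance

/-- The topology of finitely open sets: `O` is open iff its intersection with every
finite-dimensional subspace `U` is open in the Euclidean topology of `U`. -/
def finTop (E : Type*) [AddCommGroup E] [Module ℝ E] : TopologicalSpace E where
  IsOpen O := ∀ U : Submodule ℝ E, FiniteDimensional ℝ U →
    @IsOpen _ (weakTop U) ((Subtype.val : U → E) ⁻¹' O)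
  isOpen_univ := by
    intro U _
    letI := weakTop U
    rw [Set.preimage_univ]
    exact isOpen_univ
  isOpen_inter := by
    intro s t hs ht U hU
    letI := weakTop U
    rw [Set.preimage_inter]
    exact (hs U hU).inter (ht U hU)
  isOpen_sUnion := by
    intro s hs U hU
    letI := weakTop U
    rw [Set.preimage_sUnion]
    exact isOpen_biUnion fun t ht => hs t ht U hU

/-- The closure of a convex cone in the finest locally convex topology, via the dual
characterization: `x` lies in the closure iff `L x ≥ 0` for every linear functional `L`
nonnegative on the cone. -/
def dualClosure {E : Type*} [AddCommGroup E] [Module ℝ E] (C : Set E) : Set E :=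
  {x | ∀ L : E →ₗ[ℝ] ℝ, (∀ c ∈ C, 0 ≤ L c) → 0 ≤ L x}

/-- The preordering generated by `g 1, …, g m` in a commutative ring: all finite sums
of elements `σ • g₁^ν₁ ⋯ g_m^ν_m` with `σ` a sum of squares and `ν ∈ {0,1}^m`. -/
def genPreordering {E : Type*} [CommRing E] {m : ℕ} (g : Fin m → E) : Set E :=
  {x | ∃ σ : (Fin m → Bool) → E, (∀ ν, IsSumSq (σ ν)) ∧
    x = ∑ ν : Fin m → Bool, σ ν * ∏ j, (if ν j then g j else 1)}

/-- The basic closed semialgebraic set determined by `g 1, …, g m`. -/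
def KS {n m : ℕ} (g : Fin m → MvPolynomial (Fin n) ℝ) : Set (Fin n → ℝ) :=
  {x | ∀ i, 0 ≤ eval x (g i)}

/-- The real zero set of a polynomial. -/
def Zset {n : ℕ} (d : MvPolynomial (Fin n) ℝ) : Set (Fin n → ℝ) :=
  {x | eval x d = 0}

/-- `Pos^E(𝒳)`: elements of the localization having a representation `f/d` with
`f·d ≥ 0 pointwise on 𝒳`. -/
def PosE {n : ℕ} (D : Submonoid (MvPolynomial (Fin n) ℝ)) (X : Set (Fin n → ℝ)) :
    Set (Localization D) :=
  {R | ∃ (f : MvPolynomial (Fin n) ℝ) (d : D), R = Localization.mk f d ∧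
    ∀ x ∈ X, 0 ≤ eval x f * eval x (d : MvPolynomial (Fin n) ℝ)}

/-! ### Prime cones and ordered fields -/

/-- `P + aP`, the preordering generated by `P` and `a`. -/
def adjoinCone {A : Type*} [CommRing A] (P : Subsemiring A) (hsq : ∀ a, a * a ∈ P) (a : A) :
    Subsemiring A where
  carrier := {x | ∃ s ∈ P, ∃ t ∈ P, x = s + a * t}
  mul_mem' := by
    rintro _ _ ⟨s, hs, t, ht, rfl⟩ ⟨s', hs', t', ht', rfl⟩
    refine ⟨s * s' + a * a * (t * t'), ?_, s * t' + t * s', ?_, by ring⟩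
    · exact add_mem (mul_mem hs hs') (mul_mem (hsq a) (mul_mem ht ht'))
    · exact add_mem (mul_mem hs ht') (mul_mem ht hs')
  one_mem' := ⟨1, one_mem _, 0, zero_mem _, by ring⟩
  add_mem' := by
    rintro _ _ ⟨s, hs, t, ht, rfl⟩ ⟨s', hs', t', ht', rfl⟩
    exact ⟨s + s', add_mem hs hs', t + t', add_mem ht ht', by ring⟩
  zero_mem' := ⟨0, zero_mem _, 0, zero_mem _, by ring⟩

lemma le_adjoinCone {A : Type*} [CommRing A] (P : Subsemiring A) (hsq : ∀ a, a * a ∈ P) (a : A) :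
    P ≤ adjoinCone P hsq a := fun x hx => ⟨x, hx, 0, zero_mem _, by ring⟩

lemma mem_adjoinCone {A : Type*} [CommRing A] (P : Subsemiring A) (hsq : ∀ a, a * a ∈ P) (a : A) :
    a ∈ adjoinCone P hsq a := ⟨0, zero_mem _, 1, one_mem _, by ring⟩

/-- A proper preordering lies in a prime cone (a point of the real spectrum). -/
lemma exists_primeCone {A : Type*} [CommRing A] (T : Subsemiring A) (hsq : ∀ a, a * a ∈ T)
    (hT : (-1 : A) ∉ T) :
    ∃ P : Subsemiring A, T ≤ P ∧ (-1 : A) ∉ P ∧ (∀ a, a ∈ P ∨ -a ∈ P) ∧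
      ∀ a b, a * b ∈ P → -(a * b) ∈ P → (a ∈ P ∧ -a ∈ P) ∨ (b ∈ P ∧ -b ∈ P) := by
  obtain ⟨P, hTP, hPmax⟩ := zorn_le_nonempty₀ {P : Subsemiring A | T ≤ P ∧ (-1 : A) ∉ P} (by
    intro c hc hchain y hy
    refine ⟨sSup c, ⟨?_, ?_⟩, fun z hz => le_sSup hz⟩
    · exact (hc hy).1.trans (le_sSup hy)
    · rw [Subsemiring.mem_sSup_of_directedOn ⟨y, hy⟩ hchain.directedOn]
      rintro ⟨s, hs, h⟩
      exact (hc hs).2 h) T ⟨le_rfl, hT⟩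
  obtain ⟨⟨_, hneg⟩, hmax⟩ := hPmax
  have hsqP : ∀ a, a * a ∈ P := fun a => hTP (hsq a)
  have key : ∀ a, a ∉ P → ∃ s ∈ P, ∃ t ∈ P, -1 = s + a * t := by
    intro a ha
    by_contra hcon
    have h1 : adjoinCone P hsqP a ≤ P :=
      hmax ⟨hTP.trans (le_adjoinCone P hsqP a), hcon⟩ (le_adjoinCone P hsqP a)
    exact ha (h1 (mem_adjoinCone P hsqP a))
  have htot : ∀ a, a ∈ P ∨ -a ∈ P := by
    intro a
    by_contra! h
    obtain ⟨s, hs, t, ht, e⟩ := key a h.1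
    obtain ⟨s', hs', t', ht', e'⟩ := key (-a) h.2
    apply hneg
    have : (-1 : A) = s + s' + s * s' + a * a * (t * t') := by
      linear_combination (1 + s') * e - a * t * e'
    rw [this]
    exact add_mem (add_mem (add_mem hs hs') (mul_mem hs hs')) (mul_mem (hsqP a) (mul_mem ht ht'))
  have core : ∀ a b, -a ∉ P → -b ∉ P → -(a * b) ∈ P → False := by
    intro a b ha hb h
    obtain ⟨s, hs, t, ht, e⟩ := key (-a) ha
    obtain ⟨s', hs', t', ht', e'⟩ := key (-b) hb
    apply hneg
    have : (-1 : A) = s + s' + s * s' + -(a * b) * (t * t') := by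
      linear_combination (1 + s') * e + a * t * e'
    rw [this]
    exact add_mem (add_mem (add_mem hs hs') (mul_mem hs hs')) (mul_mem h (mul_mem ht ht'))
  refine ⟨P, hTP, hneg, htot, ?_⟩
  intro a b h1 h2
  by_contra! hcon
  obtain ⟨hA, hB⟩ := hcon
  by_cases ha : a ∈ P <;> by_cases hb : b ∈ P
  · exact core a b (hA ha) (hB hb) h2
  · exact core a (-b) (hA ha) (by simpa using hb) (by simpa using h1)
  · exact core (-a) b (by simpa using ha) (hB hb) (by simpa using h1)
  · exact core (-a) (-b) (by simpa using ha) (by simpa using hb) (by simpa using h2)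

/-- A field with a total positive cone is a linearly ordered field. -/
lemma exists_linearOrder_of_cone {K : Type*} [Field K] (P : Subsemiring K)
    (htot : ∀ a, a ∈ P ∨ -a ∈ P) (hanti : ∀ a, a ∈ P → -a ∈ P → a = 0) :
    ∃ (_ : LinearOrder K) (_ : IsStrictOrderedRing K), ∀ a : K, 0 ≤ a ↔ a ∈ P := by
  classical
  let _ : LinearOrder K :=
    { le := fun a b => b - a ∈ P
      le_refl := fun a => by simp
      le_trans := fun a b c h1 h2 => by
        have := add_mem h1 h2
        simpa using this
      le_antisymm := fun a b h1 h2 => by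
        have := hanti (b - a) h1 (by simpa using h2)
        exact (sub_eq_zero.1 this).symm
      le_total := fun a b => by
        have := htot (b - a)
        simpa using this
      toDecidableLE := Classical.decRel _ }
  have hle : ∀ a b : K, a ≤ b ↔ b - a ∈ P := fun a b => Iff.rfl
  have : IsOrderedAddMonoid K := ⟨fun a b h c => by
    rw [hle] at h ⊢; simpa using h, fun a b h c => by rw [hle] at h ⊢; simpa using h⟩
  have : ZeroLEOneClass K := ⟨by rw [hle]; simp⟩
  have : IsOrderedRing K := IsOrderedRing.of_mul_nonneg (fun a b ha hb => by
    rw [hle] at ha hb ⊢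
    simpa using mul_mem (by simpa using ha) (by simpa using hb))
  have : IsStrictOrderedRing K := IsOrderedRing.toIsStrictOrderedRing K
  exact ⟨inferInstance, inferInstance, fun a => by rw [hle]; simp⟩

/-- A proper preordering of a commutative ring maps into the nonnegative cone of an
ordered field: the residue field of the real spectrum at a point above the preordering. -/
lemma exists_orderedField {A : Type} [CommRing A] (T : Subsemiring A) (hsq : ∀ a, a * a ∈ T)
    (hT : (-1 : A) ∉ T) :
    ∃ (F : Type) (_ : Field F) (_ : LinearOrder F) (_ : IsStrictOrderedRing F) (φ : A →+* F),
      ∀ a ∈ T, 0 ≤ φ a := by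
  obtain ⟨P, hTP, hneg, htot, hprime⟩ := exists_primeCone T hsq hT
  have hsqP : ∀ a, a * a ∈ P := fun a => hTP (hsq a)
  let I : Ideal A :=
    { carrier := {x | x ∈ P ∧ -x ∈ P}
      add_mem' := fun {a b} ha hb => ⟨add_mem ha.1 hb.1, by
        rw [neg_add]; exact add_mem ha.2 hb.2⟩
      zero_mem' := by simp
      smul_mem' := fun c x hx => by
        rcases htot c with h | h
        · exact ⟨mul_mem h hx.1, by simpa using mul_mem h hx.2⟩
        · exact ⟨by simpa using mul_mem h hx.2, by simpa using mul_mem h hx.1⟩ }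
  have hI : ∀ x, x ∈ I ↔ x ∈ P ∧ -x ∈ P := fun x => Iff.rfl
  have : I.IsPrime := by
    refine ⟨?_, fun {a b} h => hprime a b h.1 h.2⟩
    rw [Ideal.ne_top_iff_one]
    exact fun h => hneg h.2
  let F := FractionRing (A ⧸ I)
  let φ : A →+* F := (algebraMap (A ⧸ I) F).comp (Ideal.Quotient.mk I)
  have hφ0 : ∀ a, φ a = 0 ↔ a ∈ I := by
    intro a
    simp only [φ, RingHom.comp_apply]
    rw [FaithfulSMul.algebraMap_eq_zero_iff, Ideal.Quotient.eq_zero_iff_mem]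
  have hfrac : ∀ x : F, ∃ a b, b ∉ I ∧ x = φ a / φ b := by
    intro x
    obtain ⟨a, b, hb, rfl⟩ := IsFractionRing.div_surjective (A := A ⧸ I) x
    obtain ⟨a, rfl⟩ := Ideal.Quotient.mk_surjective a
    obtain ⟨b, rfl⟩ := Ideal.Quotient.mk_surjective b
    refine ⟨a, b, ?_, rfl⟩
    rw [← Ideal.Quotient.eq_zero_iff_mem]
    exact nonZeroDivisors.ne_zero hb
  -- the denominator may be taken positive, since `a / b = a b / b²`
  have hfrac' : ∀ x : F, ∃ a b, b ∈ P ∧ b ∉ I ∧ x = φ a / φ b := by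
    intro x
    obtain ⟨a, b, hb, rfl⟩ := hfrac x
    refine ⟨a * b, b * b, hsqP b, fun h => ?_, ?_⟩
    · rcases Ideal.IsPrime.mem_or_mem ‹_› h with h | h <;> exact hb h
    · have : φ b ≠ 0 := fun h => hb ((hφ0 b).1 h)
      simp only [map_mul]
      rw [mul_div_mul_right _ _ this]
  have hmul : ∀ a b, b ∈ P → b ∉ I → (a * b ∈ P) → a ∈ P := by
    intro a b hb hbI hab
    rcases htot a with h | h
    · exact h
    · have : a * b ∈ I := ⟨hab, by simpa using mul_mem h hb⟩
      rcases Ideal.IsPrime.mem_or_mem ‹_› this with h | h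
      · exact h.1
      · exact absurd h hbI
  have hcongr : ∀ a b, φ a = φ b → a ∈ P → b ∈ P := by
    intro a b h ha
    have : b - a ∈ I := by rw [← hφ0, map_sub, h, sub_self]
    simpa using add_mem ha this.1
  let Q : Subsemiring F :=
    { carrier := {x | ∃ a b, a ∈ P ∧ b ∈ P ∧ b ∉ I ∧ x = φ a / φ b}
      mul_mem' := by
        rintro _ _ ⟨a, b, ha, hb, hbI, rfl⟩ ⟨a', b', ha', hb', hbI', rfl⟩
        refine ⟨a * a', b * b', mul_mem ha ha', mul_mem hb hb', fun h => ?_, ?_⟩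
        · rcases Ideal.IsPrime.mem_or_mem ‹_› h with h | h
          · exact hbI h
          · exact hbI' h
        · simp only [map_mul]; rw [div_mul_div_comm]
      one_mem' := ⟨1, 1, one_mem _, one_mem _, fun h => hneg h.2, by simp⟩
      add_mem' := by
        rintro _ _ ⟨a, b, ha, hb, hbI, rfl⟩ ⟨a', b', ha', hb', hbI', rfl⟩
        refine ⟨a * b' + b * a', b * b', add_mem (mul_mem ha hb') (mul_mem hb ha'),
          mul_mem hb hb', fun h => ?_, ?_⟩
        · rcases Ideal.IsPrime.mem_or_mem ‹_› h with h | h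
          · exact hbI h
          · exact hbI' h
        · have h1 : φ b ≠ 0 := fun h => hbI ((hφ0 b).1 h)
          have h2 : φ b' ≠ 0 := fun h => hbI' ((hφ0 b').1 h)
          simp only [map_mul, map_add]
          rw [div_add_div _ _ h1 h2]
      zero_mem' := ⟨0, 1, zero_mem _, one_mem _, fun h => hneg h.2, by simp⟩ }
  obtain ⟨o, io, ho⟩ := exists_linearOrder_of_cone Q (by
      intro x
      obtain ⟨a, b, hb, hbI, rfl⟩ := hfrac' x
      rcases htot a with h | h
      · exact Or.inl ⟨a, b, h, hb, hbI, rfl⟩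
      · exact Or.inr ⟨-a, b, h, hb, hbI, by rw [map_neg, neg_div]⟩) (by
      rintro x ⟨a, b, ha, hb, hbI, rfl⟩ ⟨a', b', ha', hb', hbI', h⟩
      have h1 : φ b ≠ 0 := fun h => hbI ((hφ0 b).1 h)
      have h2 : φ b' ≠ 0 := fun h => hbI' ((hφ0 b').1 h)
      have h3 : φ (a' * b) = φ (-a * b') := by
        rw [← neg_div, div_eq_div_iff h1 h2] at h
        simp only [map_mul, map_neg]
        linear_combination -h
      have h4 : -a ∈ P := hmul _ b' hb' hbI' (hcongr _ _ h3 (mul_mem ha' hb))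
      have : φ a = 0 := (hφ0 a).2 ⟨ha, h4⟩
      rw [this, zero_div])
  refine ⟨F, inferInstance, o, io, φ, fun a ha => (ho _).2 ?_⟩
  exact ⟨a, 1, hTP ha, one_mem _, fun h => hneg h.2, by simp⟩

/-! ### Ordered extensions with the intermediate value property -/

/-- The intermediate value property for polynomials (which characterizes real closed fields). -/
def PolyIVT (R : Type*) [Field R] [LinearOrder R] : Prop :=
  ∀ (f : Polynomial R) (a b : R), a < b → f.eval a < 0 → 0 < f.eval b →
    ∃ c, a < c ∧ c < b ∧ f.eval c = 0

/-- Weighted squares `c g²` with `c ≥ 0`, in the polynomial ring over an ordered field. -/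
def weightedSquares (F : Type*) [Field F] [LinearOrder F] [IsStrictOrderedRing F] :
    Submonoid (Polynomial F) where
  carrier := {s | ∃ (c : F) (g : Polynomial F), 0 ≤ c ∧ s = Polynomial.C c * g ^ 2}
  mul_mem' := by
    rintro _ _ ⟨c, g, hc, rfl⟩ ⟨c', g', hc', rfl⟩
    exact ⟨c * c', g * g', mul_nonneg hc hc', by rw [Polynomial.C_mul]; ring⟩
  one_mem' := ⟨1, 1, zero_le_one, by simp⟩

/-- Artin–Schreier: a root of a sign-changing polynomial `f` can be adjoined to an ordered field so
that the order extends. Otherwise `-1` is, modulo `f`, a sum `s` of weighted squares of degree at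
most `2 (deg f - 1)`; the cofactor `h` in `f h = 1 + s` then has smaller degree than `f` and changes
sign too, and evaluating `1 + s` at an adjoined root of `h` is absurd. -/
lemma exists_ordered_root {F : Type} [Field F] [LinearOrder F] [IsStrictOrderedRing F] :
    ∀ (N : ℕ) (f : Polynomial F) (a b : F), f.natDegree ≤ N → f.eval a * f.eval b < 0 →
    ∃ (F' : Type) (_ : Field F') (_ : LinearOrder F') (_ : IsStrictOrderedRing F')
      (ψ : Polynomial F →+* F'), ψ f = 0 ∧ ∀ c : F, 0 ≤ c → 0 ≤ ψ (Polynomial.C c) := by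
  intro N
  induction N using Nat.strong_induction_on with
  | _ N ih =>
  intro f a b hN hab
  have hf0 : f ≠ 0 := by rintro rfl; simp at hab
  have hdeg : 0 < f.natDegree := by
    rw [Nat.pos_iff_ne_zero]
    intro h
    rw [Polynomial.eq_C_of_natDegree_eq_zero h] at hab
    simp only [Polynomial.eval_C] at hab
    nlinarith [mul_self_nonneg (f.coeff 0)]
  let S : Subsemiring (Polynomial F) := (weightedSquares F).subsemiringClosure
  have hSclosure : ∀ s, s ∈ S ↔ s ∈ AddSubmonoid.closure (weightedSquares F : Set (Polynomial F)) :=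
    fun s => Iff.rfl
  have hred : ∀ s ∈ S, ∃ s' ∈ S, f ∣ s - s' ∧ s'.natDegree ≤ 2 * (f.natDegree - 1) := by
    intro s hs
    rw [hSclosure] at hs
    induction hs using AddSubmonoid.closure_induction with
    | mem x hx =>
      obtain ⟨c, g, hc, rfl⟩ := hx
      refine ⟨Polynomial.C c * (g % f) ^ 2, ?_, ?_, ?_⟩
      · rw [hSclosure]
        exact AddSubmonoid.subset_closure ⟨c, _, hc, rfl⟩
      · have h1 : f ∣ g - g % f := ⟨g / f, by
          nth_rw 1 [← EuclideanDomain.div_add_mod g f]; ring⟩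
        have : Polynomial.C c * g ^ 2 - Polynomial.C c * (g % f) ^ 2 =
          (g - g % f) * (Polynomial.C c * (g + g % f)) := by ring
        rw [this]
        exact Dvd.dvd.mul_right h1 _
      · have h1 : (g % f).natDegree < f.natDegree := Polynomial.natDegree_mod_lt g hdeg.ne'
        calc _ ≤ ((g % f) ^ 2).natDegree := Polynomial.natDegree_C_mul_le _ _
          _ ≤ 2 * (g % f).natDegree := Polynomial.natDegree_pow_le
          _ ≤ _ := by omega
    | zero => exact ⟨0, zero_mem _, by simp, by simp⟩
    | add x y _ _ hx hy =>
      obtain ⟨x', hx', h1, h2⟩ := hx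
      obtain ⟨y', hy', h3, h4⟩ := hy
      refine ⟨x' + y', add_mem hx' hy', ?_, Polynomial.natDegree_add_le_of_degree_le h2 h4⟩
      rw [add_sub_add_comm]
      exact dvd_add h1 h3
  -- the preimage in `F[X]` of the preordering generated by the order of `F` in `F[X] / (f)`
  let T : Subsemiring (Polynomial F) :=
    { carrier := {t | ∃ s ∈ S, f ∣ t - s}
      mul_mem' := by
        rintro t t' ⟨s, hs, h⟩ ⟨s', hs', h'⟩
        refine ⟨s * s', mul_mem hs hs', ?_⟩
        have : t * t' - s * s' = (t - s) * t' + (t' - s') * s := by ring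
        rw [this]
        exact dvd_add (h.mul_right _) (h'.mul_right _)
      one_mem' := ⟨1, one_mem _, by simp⟩
      add_mem' := by
        rintro t t' ⟨s, hs, h⟩ ⟨s', hs', h'⟩
        refine ⟨s + s', add_mem hs hs', ?_⟩
        rw [add_sub_add_comm]
        exact dvd_add h h'
      zero_mem' := ⟨0, zero_mem _, by simp⟩ }
  have hST : ∀ s ∈ S, s ∈ T := fun s hs => ⟨s, hs, by simp⟩
  have hgen : ∀ c g, 0 ≤ c → Polynomial.C c * g ^ 2 ∈ S := fun c g hc => by
    rw [hSclosure]
    exact AddSubmonoid.subset_closure ⟨c, g, hc, rfl⟩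
  have hT : (-1 : Polynomial F) ∉ T := by
    rintro ⟨s, hs, hfs⟩
    obtain ⟨s', hs', hfs', hdeg'⟩ := hred s hs
    have hdvd : f ∣ 1 + s' := by
      have := dvd_add hfs hfs'
      rw [← dvd_neg]
      convert this using 1
      ring
    obtain ⟨h, hh⟩ := hdvd
    have hpos : ∀ c, 0 < (1 + s').eval c := by
      intro c
      have : 0 ≤ s'.eval c := by
        rw [hSclosure] at hs'
        clear hfs' hdeg' hh
        induction hs' using AddSubmonoid.closure_induction with
        | mem x hx =>
          obtain ⟨e, g, hc, rfl⟩ := hx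
          simp only [Polynomial.eval_mul, Polynomial.eval_C, Polynomial.eval_pow]
          positivity
        | zero => simp
        | add x y _ _ h1 h2 =>
          rw [Polynomial.eval_add]
          exact add_nonneg h1 h2
      rw [Polynomial.eval_add, Polynomial.eval_one]
      linarith
    have hne : (1 : Polynomial F) + s' ≠ 0 := fun h0 => by
      have := hpos 0
      rw [h0] at this
      simp at this
    have hh0 : h ≠ 0 := by rintro rfl; simp at hh; exact hne hh
    have hdegh : h.natDegree < f.natDegree := by
      have h1 : (1 + s').natDegree ≤ 2 * (f.natDegree - 1) :=
        Polynomial.natDegree_add_le_of_degree_le (by simp) hdeg'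
      rw [hh, Polynomial.natDegree_mul hf0 hh0] at h1
      omega
    have hsign : h.eval a * h.eval b < 0 := by
      have h1 := hpos a
      have h2 := hpos b
      rw [hh, Polynomial.eval_mul] at h1 h2
      have h3 := mul_pos h1 h2
      have : (f.eval a * f.eval b) * (h.eval a * h.eval b) > 0 := by linarith
      by_contra hcon
      push Not at hcon
      nlinarith
    obtain ⟨F', _, _, _, ψ, hψh, hψ⟩ := ih h.natDegree (by omega) h a b le_rfl hsign
    have hψs : 0 ≤ ψ s' := by
      rw [hSclosure] at hs'
      clear hpos hh hne hfs' hdeg'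
      induction hs' using AddSubmonoid.closure_induction with
      | mem x hx =>
        obtain ⟨e, g, hc, rfl⟩ := hx
        rw [map_mul, map_pow]
        exact mul_nonneg (hψ e hc) (sq_nonneg _)
      | zero => simp
      | add x y _ _ h1 h2 =>
        rw [map_add]
        exact add_nonneg h1 h2
    have : ψ (1 + s') = 0 := by rw [hh, map_mul, hψh, mul_zero]
    rw [map_add, map_one] at this
    linarith
  obtain ⟨F', i1, i2, i3, ψ, hψ⟩ := exists_orderedField T (fun g => hST _ (by
    simpa [sq] using hgen 1 g zero_le_one)) hT
  refine ⟨F', i1, i2, i3, ψ, le_antisymm ?_ ?_, fun c hc => hψ _ (hST _ (by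
    simpa using hgen c 1 hc))⟩
  · have := hψ (-f) ⟨0, zero_mem _, by simp⟩
    simpa using this
  · exact hψ f ⟨0, zero_mem _, by simp⟩

/-- `P` is the nonnegative cone of a field ordering on the subfield `P ∪ -P` of `Ω`. -/
structure IsSubfieldCone {Ω : Type*} [Field Ω] (P : Subsemiring Ω) : Prop where
  anti : ∀ x, x ∈ P → -x ∈ P → x = 0
  tot : ∀ x ∈ P, ∀ y ∈ P, x - y ∈ P ∨ y - x ∈ P
  inv : ∀ x ∈ P, x⁻¹ ∈ P

/-- The subfield `P ∪ -P`. -/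
def IsSubfieldCone.subfield {Ω : Type*} [Field Ω] {P : Subsemiring Ω} (h : IsSubfieldCone P) :
    Subfield Ω where
  carrier := {x | x ∈ P ∨ -x ∈ P}
  mul_mem' := by
    rintro x y (hx | hx) (hy | hy)
    · exact Or.inl (mul_mem hx hy)
    · exact Or.inr (by simpa using mul_mem hx hy)
    · exact Or.inr (by simpa using mul_mem hx hy)
    · exact Or.inl (by simpa using mul_mem hx hy)
  one_mem' := Or.inl (one_mem _)
  add_mem' := by
    rintro x y (hx | hx) (hy | hy)
    · exact Or.inl (add_mem hx hy)
    · have := h.tot x hx (-y) hy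
      simpa [sub_eq_add_neg, add_comm] using this
    · have := h.tot y hy (-x) hx
      simpa [sub_eq_add_neg, add_comm] using this
    · exact Or.inr (by rw [neg_add]; exact add_mem hx hy)
  zero_mem' := Or.inl (zero_mem _)
  neg_mem' := by
    rintro x (hx | hx)
    · exact Or.inr (by simpa using hx)
    · exact Or.inl hx
  inv_mem' := by
    rintro x (hx | hx)
    · exact Or.inl (h.inv x hx)
    · exact Or.inr (by simpa using h.inv _ hx)

/-- Every ordered field embeds into one whose polynomials satisfy the intermediate value
theorem: a maximal algebraic ordered extension has this property. -/
lemma exists_polyIVT_extension (F : Type) [Field F] [LinearOrder F] [IsStrictOrderedRing F] :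
    ∃ (R : Type) (_ : Field R) (_ : LinearOrder R) (_ : IsStrictOrderedRing R) (φ : F →+* R),
      (∀ c, 0 ≤ c → 0 ≤ φ c) ∧ PolyIVT R := by
  let Ω := AlgebraicClosure F
  let ι : F →+* Ω := algebraMap F Ω
  let P₀ : Subsemiring Ω := (Subsemiring.nonneg F).map ι
  have hP₀ : IsSubfieldCone P₀ := by
    refine ⟨?_, ?_, ?_⟩
    · rintro _ ⟨c, hc, rfl⟩ ⟨c', hc', h⟩
      have hc0 : 0 ≤ c := hc
      have hc0' : 0 ≤ c' := hc'
      rw [← map_neg] at h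
      have := ι.injective h
      have : c = 0 := by linarith
      rw [this, map_zero]
    · rintro _ ⟨c, hc, rfl⟩ _ ⟨c', hc', rfl⟩
      rcases le_total c c' with h | h
      · exact Or.inr ⟨c' - c, sub_nonneg.2 h, by simp⟩
      · exact Or.inl ⟨c - c', sub_nonneg.2 h, by simp⟩
    · rintro _ ⟨c, hc, rfl⟩
      exact ⟨c⁻¹, inv_nonneg.2 hc, by simp⟩
  obtain ⟨P, hPP, hPmax⟩ := zorn_le_nonempty₀ {P : Subsemiring Ω | P₀ ≤ P ∧ IsSubfieldCone P} (by
    intro c hc hchain y hy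
    have hmem : ∀ x, x ∈ sSup c ↔ ∃ s ∈ c, x ∈ s := fun x =>
      Subsemiring.mem_sSup_of_directedOn ⟨y, hy⟩ hchain.directedOn
    have hmem2 : ∀ x z, x ∈ sSup c → z ∈ sSup c → ∃ s ∈ c, x ∈ s ∧ z ∈ s := by
      intro x z hx hz
      rw [hmem] at hx hz
      obtain ⟨s, hs, hxs⟩ := hx
      obtain ⟨t, ht, hzt⟩ := hz
      rcases hchain.total hs ht with h | h
      · exact ⟨t, ht, h hxs, hzt⟩
      · exact ⟨s, hs, hxs, h hzt⟩
    refine ⟨sSup c, ⟨(hc hy).1.trans (le_sSup hy), ?_, ?_, ?_⟩, fun z hz => le_sSup hz⟩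
    · intro x h1 h2
      obtain ⟨s, hs, h1, h2⟩ := hmem2 _ _ h1 h2
      exact (hc hs).2.anti x h1 h2
    · intro x h1 z h2
      obtain ⟨s, hs, h1, h2⟩ := hmem2 _ _ h1 h2
      rw [hmem, hmem]
      rcases (hc hs).2.tot x h1 z h2 with h | h
      · exact Or.inl ⟨s, hs, h⟩
      · exact Or.inr ⟨s, hs, h⟩
    · intro x h1
      rw [hmem] at h1 ⊢
      obtain ⟨s, hs, h1⟩ := h1
      exact ⟨s, hs, (hc hs).2.inv x h1⟩) P₀ ⟨le_rfl, hP₀⟩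
  obtain ⟨⟨_, hcone⟩, hmax⟩ := hPmax
  let K : Subfield Ω := hcone.subfield
  have hKmem : ∀ x : Ω, x ∈ K ↔ x ∈ P ∨ -x ∈ P := fun x => Iff.rfl
  obtain ⟨o, io, ho⟩ := exists_linearOrder_of_cone (P.comap K.subtype)
    (fun a => a.2) (fun a h1 h2 => Subtype.ext (hcone.anti a h1 h2))
  have ho' : ∀ a : K, 0 ≤ a ↔ (a : Ω) ∈ P := ho
  have hFK : ∀ c : F, ι c ∈ K := by
    intro c
    rcases le_total 0 c with h | h
    · exact Or.inl (hPP ⟨c, h, rfl⟩)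
    · exact Or.inr (hPP ⟨-c, neg_nonneg.2 h, by simp⟩)
  refine ⟨K, inferInstance, o, io, ι.codRestrict K hFK, fun c hc => ?_, ?_⟩
  · rw [ho']
    exact hPP ⟨c, hc, rfl⟩
  -- Irreducible polynomials changing sign have a root, by maximality.
  have hirr : ∀ (f : Polynomial K) (a b : K), Irreducible f → f.eval a * f.eval b < 0 →
      ∃ θ : K, f.eval θ = 0 := by
    intro f a b hf hab
    obtain ⟨F', _, _, _, ψ, hψf, hψ⟩ := exists_ordered_root _ f a b le_rfl hab
    have hdeg : f.degree ≠ 0 := fun h => hf.not_isUnit (Polynomial.isUnit_iff_degree_eq_zero.2 h)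
    obtain ⟨θ, hθ⟩ := IsAlgClosed.exists_root (f.map K.subtype) (by
      rwa [Polynomial.degree_map])
    have hroot : f.eval₂ K.subtype θ = 0 := by
      rwa [Polynomial.IsRoot.def, Polynomial.eval_map] at hθ
    let ev : Polynomial K →+* Ω := Polynomial.eval₂RingHom K.subtype θ
    have hevf : ev f = 0 := hroot
    -- both kernels are the ideal generated by `f`
    have hker : ∀ g, ev g = 0 → ψ g = 0 := by
      intro g hg
      by_cases hd : f ∣ g
      · obtain ⟨h, rfl⟩ := hd
        rw [map_mul, hψf, zero_mul]
      · obtain ⟨u, v, huv⟩ := (hf.coprime_iff_not_dvd.2 hd)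
        have := congrArg ev huv
        rw [map_add, map_mul, map_mul, hg, hevf, map_one] at this
        simp at this
    have hker' : ∀ g, ψ g = 0 → ev g = 0 := by
      intro g hg
      by_cases hd : f ∣ g
      · obtain ⟨h, rfl⟩ := hd
        rw [map_mul, hevf, zero_mul]
      · obtain ⟨u, v, huv⟩ := (hf.coprime_iff_not_dvd.2 hd)
        have := congrArg ψ huv
        rw [map_add, map_mul, map_mul, hg, hψf, map_one] at this
        simp at this
    let P' : Subsemiring Ω := ((Subsemiring.nonneg F').comap ψ).map ev
    have hP' : ∀ x, x ∈ P' ↔ ∃ g, 0 ≤ ψ g ∧ ev g = x := fun x => Iff.rfl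
    have hPP' : P ≤ P' := by
      intro x hx
      refine (hP' x).2 ⟨Polynomial.C ⟨x, Or.inl hx⟩, hψ _ ((ho' _).2 hx), ?_⟩
      simp [ev]
    have hinv : ∀ g, ev g ≠ 0 → ∃ h, ev h = (ev g)⁻¹ ∧ ψ h = (ψ g)⁻¹ := by
      intro g hg
      have hd : ¬ f ∣ g := by
        rintro ⟨h, rfl⟩
        rw [map_mul, hevf, zero_mul] at hg
        exact hg rfl
      obtain ⟨u, v, huv⟩ := (hf.coprime_iff_not_dvd.2 hd)
      refine ⟨v, eq_inv_of_mul_eq_one_left ?_, eq_inv_of_mul_eq_one_left ?_⟩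
      · rw [← map_mul, ← map_one ev, ← huv, map_add, map_mul ev u, hevf]; ring
      · rw [← map_mul, ← map_one ψ, ← huv, map_add, map_mul ψ u, hψf]; ring
    have hcone' : IsSubfieldCone P' := by
      refine ⟨?_, ?_, ?_⟩
      · rintro _ ⟨g, hg, rfl⟩ ⟨g', hg', h⟩
        have hg0 : 0 ≤ ψ g := hg
        have hg0' : 0 ≤ ψ g' := hg'
        have h1 := hker (g + g') (by rw [map_add, h]; ring)
        rw [map_add] at h1
        exact hker' g (by linarith)
      · rintro _ ⟨g, hg, rfl⟩ _ ⟨g', hg', rfl⟩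
        rcases le_total (ψ g) (ψ g') with h | h
        · exact Or.inr ⟨g' - g, show 0 ≤ ψ (g' - g) by rw [map_sub]; linarith, map_sub _ _ _⟩
        · exact Or.inl ⟨g - g', show 0 ≤ ψ (g - g') by rw [map_sub]; linarith, map_sub _ _ _⟩
      · rintro _ ⟨g, hg, rfl⟩
        by_cases h0 : ev g = 0
        · exact ⟨0, show 0 ≤ ψ 0 by simp, by
            show ev 0 = (ev g)⁻¹
            rw [h0, map_zero, inv_zero]⟩
        · obtain ⟨h, h1, h2⟩ := hinv g h0
          exact ⟨h, show 0 ≤ ψ h by rw [h2]; exact inv_nonneg.2 hg, h1⟩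
    have hP'P : P' ≤ P := hmax ⟨hPP.trans hPP', hcone'⟩ hPP'
    have hθK : θ ∈ K := by
      rcases le_total 0 (ψ Polynomial.X) with h | h
      · exact Or.inl (hP'P ((hP' _).2 ⟨Polynomial.X, h, by simp [ev]⟩))
      · exact Or.inr (hP'P ((hP' _).2 ⟨-Polynomial.X, by simpa using h, by simp [ev]⟩))
    refine ⟨⟨θ, hθK⟩, Subtype.ext ?_⟩
    have : f.eval₂ K.subtype (K.subtype ⟨θ, hθK⟩) = 0 := hroot
    rw [Polynomial.eval₂_at_apply] at this
    exact this
  -- Induction on the degree: divide out irreducible factors.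
  have hmain : ∀ (N : ℕ) (f : Polynomial K) (a b : K), f.natDegree ≤ N → a < b →
      f.eval a * f.eval b < 0 → ∃ c, a < c ∧ c < b ∧ f.eval c = 0 := by
    intro N
    induction N using Nat.strong_induction_on with
    | _ N ih =>
    intro f a b hN hlt hab
    have hf0 : f ≠ 0 := by rintro rfl; simp at hab
    have hsplit : ∀ g h : Polynomial K, f = g * h → g.natDegree < f.natDegree →
        h.natDegree < f.natDegree → ∃ c, a < c ∧ c < b ∧ f.eval c = 0 := by
      intro g h hgh hg hh
      have h1 : (g.eval a * g.eval b) * (h.eval a * h.eval b) < 0 := by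
        rw [hgh, Polynomial.eval_mul, Polynomial.eval_mul] at hab
        linarith
      rcases mul_neg_iff.1 h1 with h2 | h2
      · obtain ⟨c, h3, h4, h5⟩ := ih h.natDegree (by omega) h a b le_rfl hlt h2.2
        exact ⟨c, h3, h4, by rw [hgh, Polynomial.eval_mul, h5, mul_zero]⟩
      · obtain ⟨c, h3, h4, h5⟩ := ih g.natDegree (by omega) g a b le_rfl hlt h2.1
        exact ⟨c, h3, h4, by rw [hgh, Polynomial.eval_mul, h5, zero_mul]⟩
    have hroot : (∃ θ : K, f.eval θ = 0) → ∃ c, a < c ∧ c < b ∧ f.eval c = 0 := by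
      rintro ⟨θ, hθ⟩
      obtain ⟨h, hh⟩ := Polynomial.dvd_iff_isRoot.2 hθ
      have hh0 : h ≠ 0 := by rintro rfl; simp at hh; exact hf0 hh
      have hdeg : f.natDegree = 1 + h.natDegree := by
        rw [hh, Polynomial.natDegree_mul (Polynomial.X_sub_C_ne_zero θ) hh0,
          Polynomial.natDegree_X_sub_C]
      by_cases h1 : (h.eval a * h.eval b) < 0
      · obtain ⟨c, h3, h4, h5⟩ := ih h.natDegree (by omega) h a b le_rfl hlt h1
        exact ⟨c, h3, h4, by rw [hh, Polynomial.eval_mul, h5, mul_zero]⟩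
      · have h2 : (a - θ) * (b - θ) * (h.eval a * h.eval b) < 0 := by
          rw [hh, Polynomial.eval_mul, Polynomial.eval_mul] at hab
          simp only [Polynomial.eval_sub, Polynomial.eval_X, Polynomial.eval_C] at hab
          linarith
        rcases mul_neg_iff.1 h2 with h3 | h3
        · exact absurd h3.2 h1
        · rcases mul_neg_iff.1 h3.1 with h4 | h4
          · linarith
          · exact ⟨θ, by linarith, by linarith, hθ⟩
    have hnu : ¬ IsUnit f := by
      intro hu
      have h0 := Polynomial.natDegree_eq_zero_of_isUnit hu
      rw [Polynomial.eq_C_of_natDegree_eq_zero h0] at hab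
      simp only [Polynomial.eval_C] at hab
      nlinarith [mul_self_nonneg (f.coeff 0)]
    by_cases hirrf : Irreducible f
    · exact hroot (hirr f a b hirrf hab)
    · rw [irreducible_iff] at hirrf
      push Not at hirrf
      obtain ⟨g, h, hgh, hg, hh⟩ := hirrf hnu
      have hg0 : g ≠ 0 := by rintro rfl; simp at hgh; exact hf0 hgh
      have hh0 : h ≠ 0 := by rintro rfl; simp at hgh; exact hf0 hgh
      have hdeg : f.natDegree = g.natDegree + h.natDegree := by
        rw [hgh, Polynomial.natDegree_mul hg0 hh0]
      have hgd : 0 < g.natDegree := Polynomial.natDegree_pos_iff_degree_pos.2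
        (Polynomial.degree_pos_of_ne_zero_of_nonunit hg0 hg)
      have hhd : 0 < h.natDegree := Polynomial.natDegree_pos_iff_degree_pos.2
        (Polynomial.degree_pos_of_ne_zero_of_nonunit hh0 hh)
      exact hsplit g h hgh (by omega) (by omega)
  intro f a b hlt ha hb
  exact hmain _ f a b le_rfl hlt (mul_neg_of_neg_of_pos ha hb)

/-! ### Rolle's theorem and monotonicity -/

section RealClosed
variable {R : Type} [Field R] [LinearOrder R] [IsStrictOrderedRing R]

lemma PolyIVT.exists_root (hR : PolyIVT R) (f : Polynomial R) {a b : R} (hab : a < b)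
    (h : f.eval a * f.eval b < 0) : ∃ c, a < c ∧ c < b ∧ f.eval c = 0 := by
  rcases mul_neg_iff.1 h with h | h
  · obtain ⟨c, h1, h2, h3⟩ := hR (-f) a b hab (by simpa using h.1) (by simpa using h.2)
    exact ⟨c, h1, h2, by simpa using h3⟩
  · exact hR f a b hab h.1 h.2

/-- Rolle's theorem between consecutive roots: `f = (X-a)^m (X-b)^l h` with `h` of constant sign,
and `f'` is `(X-a)^(m-1) (X-b)^(l-1)` times a polynomial taking opposite signs at `a` and `b`. -/
lemma rolle_consecutive (hR : PolyIVT R) (f : Polynomial R) (hf : f ≠ 0) {a b : R} (hab : a < b)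
    (ha : f.eval a = 0) (hb : f.eval b = 0) (hno : ∀ c, a < c → c < b → f.eval c ≠ 0) :
    ∃ c, a < c ∧ c < b ∧ f.derivative.eval c = 0 := by
  obtain ⟨g, hg, hga⟩ := Polynomial.exists_eq_pow_rootMultiplicity_mul_and_not_dvd f hf a
  have hg0 : g ≠ 0 := by rintro rfl; simp at hga
  obtain ⟨h, hh, hhb⟩ := Polynomial.exists_eq_pow_rootMultiplicity_mul_and_not_dvd g hg0 b
  have hm : 0 < f.rootMultiplicity a := (Polynomial.rootMultiplicity_pos hf).2 ha
  have hgb : g.eval b = 0 := by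
    have := hb
    rw [hg, Polynomial.eval_mul] at this
    rcases mul_eq_zero.1 this with h | h
    · simp [sub_eq_zero, hab.ne'] at h
    · exact h
  have hl : 0 < g.rootMultiplicity b := (Polynomial.rootMultiplicity_pos hg0).2 hgb
  generalize f.rootMultiplicity a = m at *
  generalize g.rootMultiplicity b = l at *
  obtain ⟨m, rfl⟩ := Nat.exists_eq_succ_of_ne_zero hm.ne'
  obtain ⟨l, rfl⟩ := Nat.exists_eq_succ_of_ne_zero hl.ne'
  have hhb' : h.eval b ≠ 0 := fun e => hhb (Polynomial.dvd_iff_isRoot.2 e)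
  have hha' : h.eval a ≠ 0 := fun e => hga (by
    rw [hh]; exact (Polynomial.dvd_iff_isRoot.2 e).mul_left _)
  have hpos : 0 < h.eval a * h.eval b := by
    by_contra hcon
    have h1 : h.eval a * h.eval b < 0 :=
      lt_of_le_of_ne (not_lt.1 hcon) (mul_ne_zero hha' hhb')
    obtain ⟨c, h2, h3, h4⟩ := hR.exists_root h hab h1
    exact hno c h2 h3 (by rw [hg, hh]; simp [h4])
  let q : Polynomial R := (m + 1 : R) • ((Polynomial.X - Polynomial.C b) * h) +
    (l + 1 : R) • ((Polynomial.X - Polynomial.C a) * h) +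
    (Polynomial.X - Polynomial.C a) * (Polynomial.X - Polynomial.C b) * h.derivative
  have hq : ∀ c, f.derivative.eval c = (c - a) ^ m * (c - b) ^ l * q.eval c := by
    intro c
    rw [hg, hh]
    simp [q, Polynomial.derivative_pow]
    ring
  have hqa : q.eval a = (m + 1) * ((a - b) * h.eval a) := by simp [q]
  have hqb : q.eval b = (l + 1) * ((b - a) * h.eval b) := by simp [q]
  have hsgn : q.eval a * q.eval b < 0 := by
    have e : q.eval a * q.eval b =
        -((m + 1) * (l + 1) * (b - a) ^ 2 * (h.eval a * h.eval b)) := by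
      rw [hqa, hqb]; ring
    rw [e, neg_lt_zero]
    have : 0 < b - a := sub_pos.2 hab
    positivity
  obtain ⟨c, h1, h2, h3⟩ := hR.exists_root q hab hsgn
  exact ⟨c, h1, h2, by rw [hq, h3, mul_zero]⟩

lemma rolle (hR : PolyIVT R) (f : Polynomial R) {a b : R} (hab : a < b)
    (ha : f.eval a = 0) (hb : f.eval b = 0) :
    ∃ c, a < c ∧ c < b ∧ f.derivative.eval c = 0 := by
  classical
  by_cases hf : f = 0
  · obtain ⟨c, h1, h2⟩ := exists_between hab
    exact ⟨c, h1, h2, by simp [hf]⟩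
  let S := f.roots.toFinset.filter (fun c => a < c)
  have hbS : b ∈ S := by simp [S, hf, hb, hab]
  obtain ⟨b', hb'S, hmin⟩ := S.exists_min_image id ⟨b, hbS⟩
  simp only [S, Finset.mem_filter, Multiset.mem_toFinset, Polynomial.mem_roots hf, id,
    Polynomial.IsRoot.def] at hb'S hmin
  have hle : b' ≤ b := hmin b ⟨hb, hab⟩
  obtain ⟨c, h1, h2, h3⟩ := rolle_consecutive hR f hf hb'S.2 ha hb'S.1 (fun c h1 h2 h3 =>
    absurd (hmin c ⟨h3, h1⟩) (not_le.2 h2))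
  exact ⟨c, h1, h2.trans_le hle, h3⟩

lemma lt_of_derivative_pos (hR : PolyIVT R) (f : Polynomial R) {a b : R} (hab : a < b)
    (h : ∀ c, a < c → c < b → 0 < f.derivative.eval c) : f.eval a < f.eval b := by
  have hd : b - a ≠ 0 := (sub_pos.2 hab).ne'
  let t := (f.eval b - f.eval a) / (b - a)
  let g := f - Polynomial.C t * (Polynomial.X - Polynomial.C a) - Polynomial.C (f.eval a)
  have ht : t * (b - a) = f.eval b - f.eval a := div_mul_cancel₀ _ hd
  obtain ⟨c, h1, h2, h3⟩ := rolle hR g hab (by simp [g]) (by simp [g, ht])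
  have h4 : f.derivative.eval c = t := by
    simp [g] at h3
    linarith
  have h5 := h c h1 h2
  rw [h4] at h5
  have := mul_pos h5 (sub_pos.2 hab)
  rw [ht] at this
  linarith

end RealClosed

/-! ### Embedding countable ordered fields into saturated ones -/

set_option linter.unusedSectionVars false

section Transfer
variable {R R' : Type} [Field R] [LinearOrder R] [IsStrictOrderedRing R]
  [Field R'] [LinearOrder R'] [IsStrictOrderedRing R'] {A : Type} [Field A]

/-- The two embeddings of `A` induce the same ordering on `A`. -/
def OrderCompat {A : Type} [CommRing A] (φ : A →+* R) (φ' : A →+* R') : Prop :=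
  ∀ a, 0 < φ a ↔ 0 < φ' a

lemma OrderCompat.symm {φ : A →+* R} {φ' : A →+* R'} (h : OrderCompat φ φ') : OrderCompat φ' φ :=
  fun a => (h a).symm

lemma OrderCompat.lt_iff {φ : A →+* R} {φ' : A →+* R'} (h : OrderCompat φ φ') (a b : A) :
    φ a < φ b ↔ φ' a < φ' b := by
  have := h (b - a)
  simpa [sub_pos] using this

lemma OrderCompat.neg_iff {φ : A →+* R} {φ' : A →+* R'} (h : OrderCompat φ φ') (a : A) :
    φ a < 0 ↔ φ' a < 0 := by
  simpa using h.lt_iff a 0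

/-- `α` and `α'` fill the same cut of `A`. -/
def SameCut (φ : A →+* R) (φ' : A →+* R') (α : R) (α' : R') : Prop :=
  ∀ a, (φ a < α ↔ φ' a < α') ∧ (α < φ a ↔ α' < φ' a)

lemma SameCut.symm {φ : A →+* R} {φ' : A →+* R'} {α : R} {α' : R'} (h : SameCut φ φ' α α') :
    SameCut φ' φ α' α :=
  fun a => ⟨(h a).1.symm, (h a).2.symm⟩

lemma SameCut.eq_iff {φ : A →+* R} {φ' : A →+* R'} {α : R} {α' : R'} (h : SameCut φ φ' α α')
    (a : A) : φ a = α ↔ φ' a = α' := by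
  have := h a
  constructor
  · intro e
    rcases lt_trichotomy (φ' a) α' with h1 | h1 | h1
    · exact absurd (this.1.2 h1) (by simp [e])
    · exact h1
    · exact absurd (this.2.2 h1) (by simp [e])
  · intro e
    rcases lt_trichotomy (φ a) α with h1 | h1 | h1
    · exact absurd (this.1.1 h1) (by simp [e])
    · exact h1
    · exact absurd (this.2.1 h1) (by simp [e])

lemma eval_map_apply' (φ : A →+* R) (f : Polynomial A) (a : A) :
    (f.map φ).eval (φ a) = φ (f.eval a) := by
  rw [Polynomial.eval_map, Polynomial.eval₂_at_apply]

/-- If every root of `f` lies on the same side of `a` as of `b`, then `f` has the same sign at both. -/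
lemma pos_of_no_root (hR : PolyIVT R) (f : Polynomial R) {a b : R} (ha : 0 < f.eval a)
    (h : ∀ c, f.eval c = 0 → (c < a ↔ c < b) ∧ (a < c ↔ b < c)) : 0 < f.eval b := by
  by_contra hb
  have hb' : f.eval b ≠ 0 := by
    intro hb'
    have := h b hb'
    rcases lt_trichotomy a b with h1 | h1 | h1
    · exact lt_irrefl _ (this.2.1 h1)
    · rw [h1, hb'] at ha; exact lt_irrefl _ ha
    · exact lt_irrefl _ (this.1.1 h1)
  have hb2 : f.eval b < 0 := lt_of_le_of_ne (not_lt.1 hb) hb'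
  have hab : a ≠ b := by rintro rfl; exact hb ha
  rcases lt_or_gt_of_ne hab with h1 | h1
  · obtain ⟨c, h2, h3, h4⟩ := hR.exists_root f h1 (mul_neg_of_pos_of_neg ha hb2)
    exact lt_asymm h3 ((h c h4).2.1 h2)
  · obtain ⟨c, h2, h3, h4⟩ := hR.exists_root f h1 (mul_neg_of_neg_of_pos hb2 ha)
    exact lt_asymm h2 ((h c h4).1.1 h3)

/-- A point outside a finite subset of `A` has the same position relative to that set as some
element of `A`. -/
lemma exists_same_side (φ : A →+* R) (s : Set R) (hfin : s.Finite) (hs : ∀ r ∈ s, ∃ a, φ a = r)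
    (α : R) (hα : α ∉ s) : ∃ z, ∀ r ∈ s, (r < α ↔ r < φ z) ∧ (α < r ↔ φ z < r) := by
  classical
  have key : ∀ z, (∀ r ∈ s, r < α → r < φ z) → (∀ r ∈ s, α < r → φ z < r) →
      ∃ z, ∀ r ∈ s, (r < α ↔ r < φ z) ∧ (α < r ↔ φ z < r) := by
    intro z h1 h2
    refine ⟨z, fun r hr => ?_⟩
    have hne : r ≠ α := by rintro rfl; exact hα hr
    rcases lt_or_gt_of_ne hne with h | h
    · exact ⟨iff_of_true h (h1 r hr h), iff_of_false h.not_gt (h1 r hr h).not_gt⟩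
    · exact ⟨iff_of_false h.not_gt (h2 r hr h).not_gt, iff_of_true h (h2 r hr h)⟩
  let U := hfin.toFinset.filter (fun r => r < α)
  let V := hfin.toFinset.filter (fun r => α < r)
  by_cases hU : U.Nonempty <;> by_cases hV : V.Nonempty
  · obtain ⟨u, hu, humax⟩ := U.exists_max_image id hU
    obtain ⟨v, hv, hvmin⟩ := V.exists_min_image id hV
    simp only [U, V, Finset.mem_filter, Set.Finite.mem_toFinset, id] at hu hv humax hvmin
    obtain ⟨a, rfl⟩ := hs u hu.1
    obtain ⟨b, rfl⟩ := hs v hv.1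
    have hab : φ a < φ b := hu.2.trans hv.2
    refine key ((a + b) / 2) (fun r h1 h2 => ?_) (fun r h1 h2 => ?_)
    · have := humax r ⟨h1, h2⟩
      simp only [map_div₀, map_add, map_ofNat]
      linarith
    · have := hvmin r ⟨h1, h2⟩
      simp only [map_div₀, map_add, map_ofNat]
      linarith
  · obtain ⟨u, hu, humax⟩ := U.exists_max_image id hU
    simp only [U, Finset.mem_filter, Set.Finite.mem_toFinset, id] at hu humax
    obtain ⟨a, rfl⟩ := hs u hu.1
    refine key (a + 1) (fun r h1 h2 => ?_) (fun r h1 h2 => ?_)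
    · have := humax r ⟨h1, h2⟩
      simp only [map_add, map_one]
      linarith
    · exact absurd ⟨r, by simp [V, h1, h2]⟩ hV
  · obtain ⟨v, hv, hvmin⟩ := V.exists_min_image id hV
    simp only [V, Finset.mem_filter, Set.Finite.mem_toFinset, id] at hv hvmin
    obtain ⟨b, rfl⟩ := hs v hv.1
    refine key (b - 1) (fun r h1 h2 => ?_) (fun r h1 h2 => ?_)
    · exact absurd ⟨r, by simp [U, h1, h2]⟩ hU
    · have := hvmin r ⟨h1, h2⟩
      simp only [map_sub, map_one]
      linarith
  · exact key 0 (fun r h1 h2 => absurd ⟨r, by simp [U, h1, h2]⟩ hU)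
      (fun r h1 h2 => absurd ⟨r, by simp [V, h1, h2]⟩ hV)

/-- All roots of `g` in `R` come from `A`. -/
def RootsIn (φ : A →+* R) (g : Polynomial A) : Prop :=
  ∀ z, (g.map φ).eval z = 0 → ∃ a, φ a = z

/-- The sign of `g` at a point is determined by the cut of the point over `A`, provided that the roots
of `g` lie in `A`: the point can be replaced by an element of `A`. -/
lemma pos_transfer (hR : PolyIVT R) (hR' : PolyIVT R') {φ : A →+* R} {φ' : A →+* R'}
    (hb : OrderCompat φ φ') {α : R} {α' : R'} (hc : SameCut φ φ' α α') (g : Polynomial A)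
    (h1 : RootsIn φ g) (h2 : RootsIn φ' g) (hpos : 0 < (g.map φ).eval α) :
    0 < (g.map φ').eval α' := by
  have hg : g ≠ 0 := by rintro rfl; simp at hpos
  have hg1 : g.map φ ≠ 0 := (Polynomial.map_ne_zero_iff φ.injective).2 hg
  obtain ⟨z, hz⟩ := exists_same_side φ {r | (g.map φ).eval r = 0}
    ((g.map φ).roots.toFinset.finite_toSet.subset (by
      intro r hr; simpa [hg1] using hr)) h1 α (by simp [hpos.ne'])
  have e1 : 0 < (g.map φ).eval (φ z) := pos_of_no_root hR _ hpos hz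
  rw [eval_map_apply', hb, ← eval_map_apply'] at e1
  refine pos_of_no_root hR' _ e1 ?_
  intro c hc0
  obtain ⟨a, rfl⟩ := h2 c hc0
  have ha : (g.map φ).eval (φ a) = 0 := by
    rw [eval_map_apply'] at hc0 ⊢
    rw [map_eq_zero] at hc0 ⊢
    exact hc0
  have := hz _ ha
  rw [(hc a).1, (hc a).2, hb.lt_iff, hb.lt_iff] at this
  exact ⟨this.1.symm, this.2.symm⟩

lemma pos_transfer_iff (hR : PolyIVT R) (hR' : PolyIVT R') {φ : A →+* R} {φ' : A →+* R'}
    (hb : OrderCompat φ φ') {α : R} {α' : R'} (hc : SameCut φ φ' α α') (g : Polynomial A)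
    (h1 : RootsIn φ g) (h2 : RootsIn φ' g) :
    0 < (g.map φ).eval α ↔ 0 < (g.map φ').eval α' :=
  ⟨pos_transfer hR hR' hb hc g h1 h2, pos_transfer hR' hR hb.symm hc.symm g h2 h1⟩

/-- Cauchy's bound: the roots of a nonzero polynomial over `A` are bounded by an element of `A`. -/
lemma exists_root_bound (φ : A →+* R) (f : Polynomial A) (hf : f ≠ 0) :
    ∃ M : A, ∀ z, (f.map φ).eval z = 0 → z < φ M ∧ φ (-M) < z := by
  let M : A := 1 + ∑ i ∈ Finset.range f.natDegree, ((f.coeff i / f.leadingCoeff) ^ 2 + 1)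
  have hM : φ M = 1 + ∑ i ∈ Finset.range f.natDegree,
      ((φ (f.coeff i) / φ f.leadingCoeff) ^ 2 + 1) := by simp [M]
  have hM1 : 1 ≤ φ M := by
    rw [hM, le_add_iff_nonneg_right]
    exact Finset.sum_nonneg fun i _ => by positivity
  have hl : φ f.leadingCoeff ≠ 0 := by simpa using hf
  refine ⟨M, fun z hz => ?_⟩
  suffices h : |z| < φ M by
    rw [abs_lt] at h
    rw [map_neg]
    exact ⟨h.2, h.1⟩
  by_contra hcon
  have hz1 : φ M ≤ |z| := not_lt.1 hcon
  have hz0 : 1 ≤ |z| := hM1.trans hz1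
  have e1 : z ^ f.natDegree = - ∑ i ∈ Finset.range f.natDegree,
      (φ (f.coeff i) / φ f.leadingCoeff) * z ^ i := by
    rw [Polynomial.eval_map, Polynomial.eval₂_eq_sum_range, Finset.sum_range_succ] at hz
    have : φ f.leadingCoeff * (∑ i ∈ Finset.range f.natDegree,
      (φ (f.coeff i) / φ f.leadingCoeff) * z ^ i) =
        ∑ i ∈ Finset.range f.natDegree, φ (f.coeff i) * z ^ i := by
      rw [Finset.mul_sum]
      refine Finset.sum_congr rfl fun i _ => ?_
      field_simp
    rw [← this, Polynomial.coeff_natDegree, ← mul_add] at hz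
    have := (mul_eq_zero.1 hz).resolve_left hl
    linarith
  have hd : f.natDegree ≠ 0 := by
    intro h0
    rw [h0] at e1
    simp at e1
  obtain ⟨d, hd'⟩ := Nat.exists_eq_succ_of_ne_zero hd
  have e2 : |z| ^ f.natDegree ≤ (∑ i ∈ Finset.range f.natDegree,
      |φ (f.coeff i) / φ f.leadingCoeff|) * |z| ^ d := by
    rw [← abs_pow, e1, abs_neg, Finset.sum_mul]
    refine (Finset.abs_sum_le_sum_abs _ _).trans (Finset.sum_le_sum fun i hi => ?_)
    rw [abs_mul, abs_pow]
    refine mul_le_mul_of_nonneg_left (pow_le_pow_right₀ hz0 ?_) (abs_nonneg _)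
    have := Finset.mem_range.1 hi
    omega
  have e3 : ∑ i ∈ Finset.range f.natDegree, |φ (f.coeff i) / φ f.leadingCoeff| < φ M := by
    have : ∑ i ∈ Finset.range f.natDegree, |φ (f.coeff i) / φ f.leadingCoeff| ≤
        ∑ i ∈ Finset.range f.natDegree, ((φ (f.coeff i) / φ f.leadingCoeff) ^ 2 + 1) := by
      refine Finset.sum_le_sum fun i _ => ?_
      generalize φ (f.coeff i) / φ f.leadingCoeff = x
      rw [abs_le]
      constructor <;> nlinarith [sq_nonneg (x - 1), sq_nonneg (x + 1)]
    rw [hM]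
    linarith
  have e4 : |z| ^ f.natDegree < |z| ^ f.natDegree := by
    refine e2.trans_lt ?_
    rw [hd', Nat.succ_eq_add_one, pow_succ', ← Nat.succ_eq_add_one, ← hd']
    exact mul_lt_mul_of_pos_right (e3.trans_le hz1) (by positivity)
  exact lt_irrefl _ e4

/-- A root `α` of `f` whose derivative has all roots in `A` has a counterpart in `R'`. The case
in which `f` is increasing near `α`. -/
lemma exists_root_sameCut_aux (hR : PolyIVT R) (hR' : PolyIVT R') {φ : A →+* R} {φ' : A →+* R'}
    (hb : OrderCompat φ φ') (f : Polynomial A)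
    (h2 : RootsIn φ' f.derivative) {α : R} (hα : (f.map φ).eval α = 0)
    {u v : A} (hu : φ u < α) (hv : α < φ v)
    (hpos : ∀ z, φ u < z → z < φ v → 0 < (f.map φ).derivative.eval z) :
    ∃ α', (f.map φ').eval α' = 0 ∧ SameCut φ φ' α α' := by
  have huv : φ u < φ v := hu.trans hv
  have huv' : φ' u < φ' v := (hb.lt_iff _ _).1 huv
  have hm : 0 < (f.derivative.map φ).eval (φ ((u + v) / 2)) := by
    rw [← Polynomial.derivative_map]
    apply hpos <;> simp only [map_div₀, map_add, map_ofNat] <;> linarith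
  have hpos' : ∀ z, φ' u < z → z < φ' v → 0 < (f.map φ').derivative.eval z := by
    rw [eval_map_apply', hb, ← eval_map_apply'] at hm
    intro z hz1 hz2
    rw [Polynomial.derivative_map]
    refine pos_of_no_root hR' _ hm fun c hc => ?_
    obtain ⟨a, rfl⟩ := h2 c hc
    have hout : ¬ (φ' u < φ' a ∧ φ' a < φ' v) := by
      rw [← hb.lt_iff, ← hb.lt_iff]
      rintro ⟨h3, h4⟩
      have := hpos _ h3 h4
      rw [Polynomial.derivative_map, eval_map_apply'] at this
      rw [eval_map_apply', map_eq_zero] at hc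
      simp [hc] at this
    simp only [map_div₀, map_add, map_ofNat]
    by_cases h5 : φ' u < φ' a
    · have h6 : φ' v ≤ φ' a := not_lt.1 fun h => hout ⟨h5, h⟩
      constructor <;> constructor <;> intro h <;> linarith
    · have h6 := not_lt.1 h5
      constructor <;> constructor <;> intro h <;> linarith
  have su : (f.map φ').eval (φ' u) < 0 := by
    rw [eval_map_apply', ← hb.neg_iff, ← eval_map_apply', ← hα]
    exact lt_of_derivative_pos hR _ hu fun c hc1 hc2 => hpos c hc1 (hc2.trans hv)
  have sv : 0 < (f.map φ').eval (φ' v) := by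
    rw [eval_map_apply', ← hb, ← eval_map_apply', ← hα]
    exact lt_of_derivative_pos hR _ hv fun c hc1 hc2 => hpos c (hu.trans hc1) hc2
  obtain ⟨α', hα1, hα2, hα3⟩ := hR' _ _ _ huv' su sv
  refine ⟨α', hα3, fun a => ?_⟩
  rcases le_or_gt (φ a) (φ u) with h3 | h3
  · have h4 : φ' a ≤ φ' u := not_lt.1 fun h => not_lt.2 h3 ((hb.lt_iff _ _).2 h)
    exact ⟨iff_of_true (h3.trans_lt hu) (h4.trans_lt hα1),
      iff_of_false (h3.trans_lt hu).not_gt (h4.trans_lt hα1).not_gt⟩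
  rcases le_or_gt (φ v) (φ a) with h4 | h4
  · have h5 : φ' v ≤ φ' a := not_lt.1 fun h => not_lt.2 h4 ((hb.lt_iff _ _).2 h)
    exact ⟨iff_of_false (hv.trans_le h4).not_gt (hα2.trans_le h5).not_gt,
      iff_of_true (hv.trans_le h4) (hα2.trans_le h5)⟩
  have h3' := (hb.lt_iff _ _).1 h3
  have h4' := (hb.lt_iff _ _).1 h4
  have i1 : φ a < α ↔ (f.map φ).eval (φ a) < 0 := by
    constructor
    · intro h
      rw [← hα]
      exact lt_of_derivative_pos hR _ h fun c hc1 hc2 => hpos c (h3.trans hc1) (hc2.trans hv)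
    · intro h
      by_contra hn
      rcases (not_lt.1 hn).eq_or_lt with e | e
      · rw [← e, hα] at h; exact lt_irrefl _ h
      · have := lt_of_derivative_pos hR (f.map φ) e
          fun c hc1 hc2 => hpos c (hu.trans hc1) (hc2.trans h4)
        rw [hα] at this
        exact lt_asymm h this
  have i2 : φ' a < α' ↔ (f.map φ').eval (φ' a) < 0 := by
    constructor
    · intro h
      rw [← hα3]
      exact lt_of_derivative_pos hR' _ h fun c hc1 hc2 => hpos' c (h3'.trans hc1) (hc2.trans hα2)
    · intro h
      by_contra hn
      rcases (not_lt.1 hn).eq_or_lt with e | e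
      · rw [← e, hα3] at h; exact lt_irrefl _ h
      · have := lt_of_derivative_pos hR' (f.map φ') e
          fun c hc1 hc2 => hpos' c (hα1.trans hc1) (hc2.trans h4')
        rw [hα3] at this
        exact lt_asymm h this
  have i3 : α < φ a ↔ 0 < (f.map φ).eval (φ a) := by
    constructor
    · intro h
      rw [← hα]
      exact lt_of_derivative_pos hR _ h fun c hc1 hc2 => hpos c (hu.trans hc1) (hc2.trans h4)
    · intro h
      by_contra hn
      rcases (not_lt.1 hn).eq_or_lt with e | e
      · rw [e, hα] at h; exact lt_irrefl _ h
      · exact lt_asymm h (i1.1 e)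
  have i4 : α' < φ' a ↔ 0 < (f.map φ').eval (φ' a) := by
    constructor
    · intro h
      rw [← hα3]
      exact lt_of_derivative_pos hR' _ h fun c hc1 hc2 => hpos' c (hα1.trans hc1) (hc2.trans h4')
    · intro h
      by_contra hn
      rcases (not_lt.1 hn).eq_or_lt with e | e
      · rw [e, hα3] at h; exact lt_irrefl _ h
      · exact lt_asymm h (i2.1 e)
  rw [i1, i2, i3, i4, eval_map_apply', eval_map_apply', hb.neg_iff, hb]
  exact ⟨Iff.rfl, Iff.rfl⟩

/-- A root `α` of `f` outside `A` has a counterpart in `R'`, if the roots of `f'` lie in `A`. These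
roots, together with a bound for the roots of `f`, enclose `α` in an interval with endpoints in `A`
on which `f` is strictly monotone. -/
lemma exists_root_sameCut (hR : PolyIVT R) (hR' : PolyIVT R') {φ : A →+* R} {φ' : A →+* R'}
    (hb : OrderCompat φ φ') (f : Polynomial A) (hf : f ≠ 0) (h1 : RootsIn φ f.derivative)
    (h2 : RootsIn φ' f.derivative) {α : R} (hα : (f.map φ).eval α = 0) (hnot : ∀ a, φ a ≠ α) :
    ∃ α', (f.map φ').eval α' = 0 ∧ SameCut φ φ' α α' := by
  classical
  have hf' : (f.map φ).derivative ≠ 0 := by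
    intro h0
    rw [Polynomial.derivative_map] at h0
    obtain ⟨a, ha⟩ := h1 α (by simp [h0])
    exact hnot a ha
  obtain ⟨M, hM⟩ := exists_root_bound φ f hf
  let s : Finset R := (f.map φ).derivative.roots.toFinset ∪ {φ M, φ (-M)}
  have hs : ∀ r ∈ s, ∃ a, φ a = r := by
    intro r hr
    simp only [s, Finset.mem_union, Multiset.mem_toFinset, Polynomial.mem_roots hf',
      Finset.mem_insert, Finset.mem_singleton, Polynomial.IsRoot.def] at hr
    rcases hr with hr | hr | hr
    · rw [Polynomial.derivative_map] at hr
      exact h1 r hr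
    · exact ⟨_, hr.symm⟩
    · exact ⟨_, hr.symm⟩
  obtain ⟨u, hu, humax⟩ := (s.filter (fun r => r < α)).exists_max_image id
    ⟨φ (-M), by simp only [Finset.mem_filter]; exact ⟨by simp [s], (hM α hα).2⟩⟩
  obtain ⟨v, hv, hvmin⟩ := (s.filter (fun r => α < r)).exists_min_image id
    ⟨φ M, by simp only [Finset.mem_filter]; exact ⟨by simp [s], (hM α hα).1⟩⟩
  simp only [Finset.mem_filter, id] at hu hv humax hvmin
  obtain ⟨a, rfl⟩ := hs u hu.1
  obtain ⟨b, rfl⟩ := hs v hv.1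
  have hroot : ∀ c, (f.map φ).derivative.eval c = 0 → c ≤ φ a ∨ φ b ≤ c := by
    intro c hc
    have hcs : c ∈ s := by
      refine Finset.mem_union_left _ ?_
      rw [Multiset.mem_toFinset, Polynomial.mem_roots hf']
      exact hc
    have hne : c ≠ α := by
      rintro rfl
      obtain ⟨x, hx⟩ := hs _ hcs
      exact hnot x hx
    rcases lt_or_gt_of_ne hne with h | h
    · exact Or.inl (humax c ⟨hcs, h⟩)
    · exact Or.inr (hvmin c ⟨hcs, h⟩)
  have hsep : ∀ z, φ a < z → z < φ b → ∀ c, (f.map φ).derivative.eval c = 0 →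
      (c < α ↔ c < z) ∧ (α < c ↔ z < c) := by
    intro z hz1 hz2 c hc
    have := hu.2
    have := hv.2
    rcases hroot c hc with h | h <;> constructor <;> constructor <;> intro h' <;> linarith
  have hne : (f.map φ).derivative.eval α ≠ 0 := by
    intro h
    rcases hroot α h with h | h
    · exact not_lt.2 h hu.2
    · exact not_lt.2 h hv.2
  rcases lt_or_gt_of_ne hne with hneg | hpos
  · obtain ⟨α', h3, h4⟩ := exists_root_sameCut_aux hR hR' hb (-f) (α := α) (u := a) (v := b)
      (fun z hz => h2 z (by simpa using hz))
      (by simpa using hα) hu.2 hv.2 (fun z hz1 hz2 => by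
        rw [Polynomial.map_neg, Polynomial.derivative_neg]
        refine pos_of_no_root hR (-(f.map φ).derivative) (a := α) (by simpa using hneg) ?_
        intro c hc
        exact hsep z hz1 hz2 c (by simpa using hc))
    exact ⟨α', by simpa using h3, h4⟩
  · exact exists_root_sameCut_aux hR hR' hb f h2 hα hu.2 hv.2 (fun z hz1 hz2 =>
      pos_of_no_root hR _ hpos (hsep z hz1 hz2))

/-- The pair `(α, β)` can be adjoined to `A` compatibly with the two orderings. -/
def Adjoinable (φ : A →+* R) (φ' : A →+* R') (α : R) (β : R') : Prop :=
  ∀ g : Polynomial A, 0 < (g.map φ).eval α ↔ 0 < (g.map φ').eval β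

/-- A root of `f` outside `A` can be adjoined, if the roots of all polynomials of smaller degree lie in
`A`: reduction modulo `f` leaves only signs of such polynomials to be compared. -/
lemma adjoinable_of_root (hR : PolyIVT R) (hR' : PolyIVT R') {φ : A →+* R} {φ' : A →+* R'}
    (hb : OrderCompat φ φ') (f : Polynomial A) (hf : f ≠ 0) (hdeg : f.natDegree ≠ 0)
    (ih : ∀ g : Polynomial A, g ≠ 0 → g.natDegree < f.natDegree → RootsIn φ g ∧ RootsIn φ' g)
    {α : R} (hα : (f.map φ).eval α = 0) (hnot : ∀ a, φ a ≠ α) :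
    ∃ α', Adjoinable φ φ' α α' := by
  have : CharZero A := by
    have h : Function.Injective (fun n : ℕ => φ (n : A)) := by
      intro a b hab
      simpa using hab
    exact ⟨fun a b hab => h (by simp [hab])⟩
  have hd0 : f.derivative ≠ 0 := by
    intro h
    exact hdeg (Polynomial.derivative_eq_zero.1 h)
  have hd := ih f.derivative hd0 (Polynomial.natDegree_derivative_lt hdeg)
  obtain ⟨α', hα', hcut⟩ := exists_root_sameCut hR hR' hb f hf hd.1 hd.2 hα hnot
  refine ⟨α', fun g => ?_⟩
  have e1 : (g.map φ).eval α = ((g % f).map φ).eval α := by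
    conv_lhs => rw [← EuclideanDomain.div_add_mod g f]
    simp [hα]
  have e2 : (g.map φ').eval α' = ((g % f).map φ').eval α' := by
    conv_lhs => rw [← EuclideanDomain.div_add_mod g f]
    simp [hα']
  rw [e1, e2]
  by_cases h0 : g % f = 0
  · simp [h0]
  have := ih (g % f) h0 (Polynomial.natDegree_mod_lt g hdeg)
  exact pos_transfer_iff hR hR' hb hcut _ this.1 this.2

/-- If nothing can be adjoined to `A`, then `A` is relatively algebraically closed on both
sides. -/
lemma rootsIn_of_maximal (hR : PolyIVT R) (hR' : PolyIVT R') {φ : A →+* R} {φ' : A →+* R'}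
    (hb : OrderCompat φ φ')
    (hmax : ∀ α α', Adjoinable φ φ' α α' → ∃ a, φ a = α ∧ φ' a = α') :
    ∀ (d : ℕ) (f : Polynomial A), f ≠ 0 → f.natDegree = d → RootsIn φ f ∧ RootsIn φ' f := by
  intro d
  induction d using Nat.strong_induction_on with
  | _ d ih =>
    intro f hf hd
    by_cases hdeg : f.natDegree = 0
    · rw [Polynomial.eq_C_of_natDegree_eq_zero hdeg] at hf ⊢
      have hc : f.coeff 0 ≠ 0 := by simpa using hf
      exact ⟨fun z hz => by simp [hc] at hz, fun z hz => by simp [hc] at hz⟩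
    have ih' : ∀ g : Polynomial A, g ≠ 0 → g.natDegree < f.natDegree →
        RootsIn φ g ∧ RootsIn φ' g := fun g hg hlt => ih _ (hd ▸ hlt) g hg rfl
    constructor
    · intro α hα
      by_contra hnot
      push Not at hnot
      obtain ⟨α', h⟩ := adjoinable_of_root hR hR' hb f hf hdeg ih' hα hnot
      obtain ⟨a, ha, _⟩ := hmax α α' h
      exact hnot a ha
    · intro α hα
      by_contra hnot
      push Not at hnot
      obtain ⟨α', h⟩ := adjoinable_of_root hR' hR hb.symm f hf hdeg
        (fun g hg hlt => (ih' g hg hlt).symm) hα hnot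
      obtain ⟨a, _, ha⟩ := hmax α' α fun g => (h g).symm
      exact hnot a ha

/-- Countable cuts `(U, V)` are filled. -/
def CountablySaturated (R : Type) [LinearOrder R] : Prop :=
  ∀ U V : Set R, U.Countable → V.Countable → (∀ u ∈ U, ∀ v ∈ V, u < v) →
    ∃ c, (∀ u ∈ U, u < c) ∧ (∀ v ∈ V, c < v)

/-- If nothing can be adjoined to the countable field `A`, then `A` is all of `R`: an element of `R`
outside `A` would be transcendental over `A`, and saturation provides an element of `R'` filling the
same cut, which is all that the signs of polynomials over `A` depend on. -/
lemma surjective_of_maximal (hR : PolyIVT R) (hR' : PolyIVT R') (hsat : CountablySaturated R')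
    [Countable A] {φ : A →+* R} {φ' : A →+* R'} (hb : OrderCompat φ φ')
    (hmax : ∀ α α', Adjoinable φ φ' α α' → ∃ a, φ a = α ∧ φ' a = α') :
    Function.Surjective φ := by
  intro α
  by_contra hnot
  push Not at hnot
  obtain ⟨α', h1, h2⟩ := hsat (φ' '' {a | φ a < α}) (φ' '' {a | α < φ a})
    ((Set.to_countable _).image _) ((Set.to_countable _).image _) (by
      rintro _ ⟨a, ha, rfl⟩ _ ⟨b, hb', rfl⟩
      exact (hb.lt_iff _ _).1 (lt_trans ha hb'))
  have hcut : SameCut φ φ' α α' := by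
    intro a
    rcases lt_or_gt_of_ne (hnot a) with h | h
    · have := h1 _ ⟨a, h, rfl⟩
      exact ⟨iff_of_true h this, iff_of_false h.not_gt this.not_gt⟩
    · have := h2 _ ⟨a, h, rfl⟩
      exact ⟨iff_of_false h.not_gt this.not_gt, iff_of_true h this⟩
  obtain ⟨a, ha, _⟩ := hmax α α' (by
    intro g
    by_cases hg : g = 0
    · simp [hg]
    have := rootsIn_of_maximal hR hR' hb hmax _ g hg rfl
    exact pos_transfer_iff hR hR' hb hcut g this.1 this.2)
  exact hnot a ha

/-- A ring of pairs whose two coordinates have the same sign; it is the graph of an isomorphism of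
ordered rings between its two projections. -/
def SignedPairs (Γ : Subring (R × R')) : Prop := ∀ x ∈ Γ, 0 < x.1 ↔ 0 < x.2

lemma SignedPairs.eq_zero {Γ : Subring (R × R')} (h : SignedPairs Γ) {x : R × R'} (hx : x ∈ Γ) :
    x.1 = 0 ↔ x.2 = 0 := by
  have h1 := h x hx
  have h2 := h (-x) (neg_mem hx)
  simp only [Prod.fst_neg, Prod.snd_neg, neg_pos] at h2
  constructor
  · intro e
    refine le_antisymm (not_lt.1 fun h => ?_) (not_lt.1 fun h => ?_)
    · exact absurd (h1.2 h) (by simp [e])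
    · exact absurd (h2.2 h) (by simp [e])
  · intro e
    refine le_antisymm (not_lt.1 fun h => ?_) (not_lt.1 fun h => ?_)
    · exact absurd (h1.1 h) (by simp [e])
    · exact absurd (h2.1 h) (by simp [e])

/-- The localization `Γ[1/c]` inside `R × R'`. -/
def invSubring (Γ : Subring (R × R')) (c : R × R') (hc : c ∈ Γ) : Subring (R × R') where
  carrier := {x | ∃ N : ℕ, c ^ (2 * N) * x ∈ Γ}
  mul_mem' := by
    rintro x y ⟨N, hN⟩ ⟨K, hK⟩
    refine ⟨N + K, ?_⟩
    have : c ^ (2 * (N + K)) * (x * y) = (c ^ (2 * N) * x) * (c ^ (2 * K) * y) := by ring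
    rw [this]
    exact mul_mem hN hK
  one_mem' := ⟨0, by simp⟩
  add_mem' := by
    rintro x y ⟨N, hN⟩ ⟨K, hK⟩
    refine ⟨N + K, ?_⟩
    have : c ^ (2 * (N + K)) * (x + y) =
        c ^ (2 * K) * (c ^ (2 * N) * x) + c ^ (2 * N) * (c ^ (2 * K) * y) := by ring
    rw [this]
    exact add_mem (mul_mem (pow_mem hc _) hN) (mul_mem (pow_mem hc _) hK)
  zero_mem' := ⟨0, by simp⟩
  neg_mem' := by
    rintro x ⟨N, hN⟩
    exact ⟨N, by simpa using hN⟩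

/-- A maximal ring of sign-compatible pairs is a field, because inverting a nonzero pair preserves
compatibility of signs. -/
lemma isField_of_maximal {Γ : Subring (R × R')} (h : SignedPairs Γ)
    (hmax : ∀ Γ', SignedPairs Γ' → Γ ≤ Γ' → Γ' ≤ Γ) : IsField Γ := by
  refine ⟨⟨0, 1, zero_ne_one⟩, mul_comm, ?_⟩
  rintro ⟨c, hc⟩ hc0
  have hc1 : c.1 ≠ 0 := by
    intro e
    apply hc0
    ext
    · exact e
    · exact (h.eq_zero hc).1 e
  have hc2 : c.2 ≠ 0 := fun e => hc1 ((h.eq_zero hc).2 e)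
  have hinv : (c.1⁻¹, c.2⁻¹) ∈ Γ := by
    refine hmax (invSubring Γ c hc) ?_ ?_ ?_
    · rintro x ⟨N, hN⟩
      have := h _ hN
      have p1 : 0 < c.1 ^ (2 * N) := by rw [pow_mul]; positivity
      have p2 : 0 < c.2 ^ (2 * N) := by rw [pow_mul]; positivity
      simpa [p1, p2] using this
    · intro x hx
      exact ⟨0, by simpa using hx⟩
    · refine ⟨1, ?_⟩
      convert hc using 1
      ext
      · simp [pow_two, hc1]
      · simp [pow_two, hc2]
  refine ⟨⟨_, hinv⟩, ?_⟩
  ext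
  · simp [hc1]
  · simp [hc2]

/-- A countable ordered field with intermediate values embeds in a countably saturated one. The
embedding, given by its graph `Γ`, extends any prescribed isomorphism `Γ₀` of ordered subrings. -/
lemma exists_embedding (hR : PolyIVT R) (hR' : PolyIVT R') (hsat : CountablySaturated R')
    [Countable R] (Γ₀ : Subring (R × R')) (h₀ : SignedPairs Γ₀) :
    ∃ Γ : Subring (R × R'), Γ₀ ≤ Γ ∧ SignedPairs Γ ∧ ∀ a : R, ∃ b, (a, b) ∈ Γ := by
  obtain ⟨Γ, hΓ0, hΓ⟩ := zorn_le_nonempty₀ {Γ : Subring (R × R') | SignedPairs Γ} (by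
    intro c hc hchain y hy
    refine ⟨sSup c, ?_, fun z hz => le_sSup hz⟩
    intro x hx
    rw [Subring.mem_sSup_of_directedOn ⟨y, hy⟩ hchain.directedOn] at hx
    obtain ⟨Γ, h1, h2⟩ := hx
    exact hc h1 x h2) Γ₀ h₀
  have hs : SignedPairs Γ := hΓ.prop
  have hmax : ∀ Γ', SignedPairs Γ' → Γ ≤ Γ' → Γ' ≤ Γ := fun Γ' h1 h2 => hΓ.le_of_ge h1 h2
  refine ⟨Γ, hΓ0, hs, ?_⟩
  let _ : Field Γ := (isField_of_maximal hs hmax).toField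
  let φ : Γ →+* R := (RingHom.fst R R').comp Γ.subtype
  let φ' : Γ →+* R' := (RingHom.snd R R').comp Γ.subtype
  have hb : OrderCompat φ φ' := fun x => hs x x.2
  have : Countable Γ := φ.injective.countable
  have hsurj := surjective_of_maximal hR hR' hsat hb (by
    intro α α' hadj
    let ψ : Polynomial Γ →+* R × R' := Polynomial.eval₂RingHom Γ.subtype (α, α')
    have e1 : ∀ g : Polynomial Γ, (ψ g).1 = (g.map φ).eval α := by
      intro g
      rw [Polynomial.eval_map]
      exact Polynomial.hom_eval₂ g Γ.subtype (RingHom.fst R R') (α, α')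
    have e2 : ∀ g : Polynomial Γ, (ψ g).2 = (g.map φ').eval α' := by
      intro g
      rw [Polynomial.eval_map]
      exact Polynomial.hom_eval₂ g Γ.subtype (RingHom.snd R R') (α, α')
    have hmem : (α, α') ∈ Γ := by
      refine hmax ψ.range ?_ ?_ ?_
      · rintro _ ⟨g, rfl⟩
        rw [e1, e2]
        exact hadj g
      · intro x hx
        exact ⟨Polynomial.C ⟨x, hx⟩, by simp [ψ]⟩
      · exact ⟨Polynomial.X, by simp [ψ]⟩
    exact ⟨⟨_, hmem⟩, rfl, rfl⟩)
  intro a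
  obtain ⟨x, hx⟩ := hsurj a
  refine ⟨φ' x, ?_⟩
  rw [← hx]
  exact x.2

end Transfer

/-! ### The hyperreals -/

section Hyperreals
open Filter

/-- The quotient map from real sequences to hyperreals. -/
def seqHom : (ℕ → ℝ) →+* Hyperreal := Germ.coeRingHom (hyperfilter ℕ : Filter ℕ)

lemma seqHom_surjective : Function.Surjective seqHom := Hyperreal.ofSeq_surjective

lemma seqHom_lt {f g : ℕ → ℝ} : seqHom f < seqHom g ↔ ∀ᶠ n in hyperfilter ℕ, f n < g n :=
  Hyperreal.ofSeq_lt_ofSeq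

lemma seqHom_le {f g : ℕ → ℝ} : seqHom f ≤ seqHom g ↔ ∀ᶠ n in hyperfilter ℕ, f n ≤ g n :=
  Hyperreal.ofSeq_le_ofSeq

lemma seqHom_eq {f g : ℕ → ℝ} : seqHom f = seqHom g ↔ ∀ᶠ n in hyperfilter ℕ, f n = g n :=
  Germ.coe_eq

lemma polyIVT_real : PolyIVT ℝ := by
  intro f a b hab ha hb
  obtain ⟨c, hc, h⟩ := intermediate_value_Ioo hab.le f.continuous.continuousOn ⟨ha, hb⟩
  exact ⟨c, hc.1, hc.2, h⟩

lemma polyIVT_hyperreal : PolyIVT Hyperreal := by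
  intro f a b hab ha hb
  obtain ⟨a, rfl⟩ := seqHom_surjective a
  obtain ⟨b, rfl⟩ := seqHom_surjective b
  choose c hc using fun i => seqHom_surjective (f.coeff i)
  let F : ℕ → Polynomial ℝ := fun n =>
    ∑ i ∈ Finset.range (f.natDegree + 1), Polynomial.C (c i n) * Polynomial.X ^ i
  have hF : ∀ x : ℕ → ℝ, f.eval (seqHom x) = seqHom (fun n => (F n).eval (x n)) := by
    intro x
    have : (fun n => (F n).eval (x n)) =
        ∑ i ∈ Finset.range (f.natDegree + 1), c i * x ^ i := by
      ext n
      simp [F, Polynomial.eval_finsetSum]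
    rw [this, map_sum, Polynomial.eval_eq_sum_range]
    simp [hc]
  rw [hF, ← map_zero seqHom, seqHom_lt] at ha hb
  rw [seqHom_lt] at hab
  have hroot : ∀ n, ∃ z, (a n < b n ∧ (F n).eval (a n) < 0 ∧ 0 < (F n).eval (b n)) →
      a n < z ∧ z < b n ∧ (F n).eval z = 0 := by
    intro n
    by_cases h : a n < b n ∧ (F n).eval (a n) < 0 ∧ 0 < (F n).eval (b n)
    · obtain ⟨z, hz⟩ := polyIVT_real (F n) _ _ h.1 h.2.1 h.2.2
      exact ⟨z, fun _ => hz⟩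
    · exact ⟨0, fun h' => absurd h' h⟩
  choose z hz using hroot
  have hall : ∀ᶠ n in hyperfilter ℕ, a n < z n ∧ z n < b n ∧ (F n).eval (z n) = 0 := by
    filter_upwards [hab, ha, hb] with n h1 h2 h3
    exact hz n ⟨h1, h2, h3⟩
  refine ⟨seqHom z, seqHom_lt.2 (hall.mono fun n h => h.1),
    seqHom_lt.2 (hall.mono fun n h => h.2.1), ?_⟩
  rw [hF, ← map_zero seqHom, seqHom_eq]
  exact hall.mono fun n h => h.2.2

/-- A diagonal sequence satisfying eventually each of countably many conditions that are
eventually finitely satisfiable. -/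
lemma exists_diagonal {ι : Type} [Encodable ι] (Q : ι → ℕ → ℝ → Prop)
    (h : ∀ s : Finset ι, ∀ᶠ n in hyperfilter ℕ, ∃ x, ∀ i ∈ s, Q i n x) :
    ∃ x : ℕ → ℝ, ∀ i, ∀ᶠ n in hyperfilter ℕ, Q i n (x n) := by
  classical
  let P : ℕ → ℕ → Prop := fun n k => ∃ x, ∀ i, Encodable.encode i < k → Q i n x
  have hP0 : ∀ n, P n 0 := fun n => ⟨0, fun i hi => absurd hi (Nat.not_lt_zero _)⟩
  let K : ℕ → ℕ := fun n => Nat.findGreatest (P n) n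
  have hK : ∀ n, P n (K n) := fun n => Nat.findGreatest_spec (Nat.zero_le n) (hP0 n)
  choose x hx using hK
  refine ⟨x, fun i => ?_⟩
  have hfin : {j : ι | Encodable.encode j < Encodable.encode i + 1}.Finite :=
    (Set.finite_lt_nat _).preimage Encodable.encode_injective.injOn
  filter_upwards [h hfin.toFinset,
    (eventually_ge_atTop (Encodable.encode i + 1)).filter_mono Nat.hyperfilter_le_atTop]
    with n hn1 hn2
  have hPn : P n (Encodable.encode i + 1) := by
    obtain ⟨y, hy⟩ := hn1
    exact ⟨y, fun j hj => hy j (by simpa using hj)⟩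
  exact hx n i (Nat.lt_of_succ_le (Nat.le_findGreatest hn2 hPn))

lemma countablySaturated_hyperreal : CountablySaturated Hyperreal := by
  classical
  intro U V hU hV hUV
  have := hU.to_subtype
  have := hV.to_subtype
  have : Encodable (U ⊕ V) := Encodable.ofCountable _
  choose r hr using seqHom_surjective
  obtain ⟨x, hx⟩ := exists_diagonal (ι := U ⊕ V)
    (fun i n x => Sum.elim (fun u : U => r u n < x) (fun v : V => x < r v n) i) (by
      intro s
      have h1 : ∀ᶠ n in hyperfilter ℕ, ∀ u ∈ s.toLeft, ∀ v ∈ s.toRight, r u n < r v n := by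
        rw [Filter.eventually_all_finset]
        intro u _
        rw [Filter.eventually_all_finset]
        intro v _
        rw [← seqHom_lt, hr, hr]
        exact hUV u u.2 v v.2
      filter_upwards [h1] with n hn
      obtain ⟨m, hm1, hm2⟩ := Order.exists_between_finsets
        (s.toLeft.image fun u : U => r u n) (s.toRight.image fun v : V => r v n) (by
          simp only [Finset.mem_image]
          rintro _ ⟨u, hu, rfl⟩ _ ⟨v, hv, rfl⟩
          exact hn u hu v hv)
      refine ⟨m, ?_⟩
      rintro (u | v) hi
      · exact hm1 _ (Finset.mem_image_of_mem _ (Finset.mem_toLeft.2 hi))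
      · exact hm2 _ (Finset.mem_image_of_mem _ (Finset.mem_toRight.2 hi)))
  refine ⟨seqHom x, fun u hu => ?_, fun v hv => ?_⟩
  · rw [← hr u, seqHom_lt]
    exact hx (Sum.inl ⟨u, hu⟩)
  · rw [← hr v, seqHom_lt]
    exact hx (Sum.inr ⟨v, hv⟩)

end Hyperreals

/-! ### The Artin–Lang theorem and the Positivstellensatz -/

section ArtinLang
variable {R : Type} [Field R] [LinearOrder R] [IsStrictOrderedRing R]

lemma countable_subfield_closure (s : Set R) (hs : s.Countable) :
    Countable (Subfield.closure s) := by
  rw [← Cardinal.mk_le_aleph0_iff]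
  exact (Subfield.cardinalMk_closure_le_max s).trans
    (max_le (Cardinal.mk_le_aleph0_iff.2 hs.to_subtype) le_rfl)

/-- Downward Löwenheim–Skolem for the intermediate value property: the relative algebraic closure of a
countable subfield inherits it. -/
lemma exists_countable_polyIVT_subfield (hR : PolyIVT R) (s : Set R) (hs : s.Countable) :
    ∃ K : Subfield R, s ⊆ K ∧ Countable K ∧ PolyIVT K := by
  let F := Subfield.closure s
  have : Countable F := countable_subfield_closure s hs
  let E := algebraicClosure F R
  refine ⟨E.toSubfield, ?_, ?_, ?_⟩
  · intro x hx
    exact E.algebraMap_mem (⟨x, Subfield.subset_closure hx⟩ : F)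
  · change Countable E
    rw [← Cardinal.mk_le_aleph0_iff]
    exact (Algebra.IsAlgebraic.cardinalMk_le_max F E).trans
      (max_le (Cardinal.mk_le_aleph0_iff.2 inferInstance) le_rfl)
  · intro f a b hab ha hb
    let j : E.toSubfield →+* R := E.toSubfield.subtype
    have hev : ∀ x : E.toSubfield, (f.map j).eval (j x) = j (f.eval x) := fun x => by
      rw [Polynomial.eval_map, Polynomial.eval₂_at_apply]
    obtain ⟨c, h1, h2, h3⟩ := hR (f.map j) (j a) (j b) hab (by rw [hev]; exact ha)
      (by rw [hev]; exact hb)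
    have hf : f ≠ 0 := by rintro rfl; simp at ha
    have hc : IsAlgebraic E c := ⟨f, hf, by
      rw [Polynomial.eval_map] at h3
      exact h3⟩
    have hc' : c ∈ E := mem_algebraicClosure_iff.2 (hc.restrictScalars F)
    refine ⟨⟨c, hc'⟩, h1, h2, ?_⟩
    apply j.injective
    rw [← hev, map_zero]
    exact h3

lemma hom_real_pos (ι : ℝ →+* R) (c : ℝ) : 0 < ι c ↔ 0 < c := by
  have key : ∀ c : ℝ, 0 < c → 0 < ι c := by
    intro c hc
    rw [← Real.mul_self_sqrt hc.le, map_mul]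
    have : ι (√c) ≠ 0 := by
      rw [Ne, map_eq_zero]
      exact (Real.sqrt_pos.2 hc).ne'
    exact mul_self_pos.2 this
  refine ⟨fun h => ?_, key c⟩
  by_contra hc
  rcases (not_lt.1 hc).eq_or_lt with e | e
  · simp [e] at h
  · have := key (-c) (by linarith)
    rw [map_neg] at this
    linarith

/-- The Artin–Lang theorem for weak inequalities. The field generated by the coefficients and the
coordinates of `x` is countable, so it embeds into the hyperreals over the coefficients; the image of
`x` is the class of a sequence of real points, almost all of which satisfy the inequalities. -/
theorem exists_real_point {n : ℕ} (hR : PolyIVT R) (ι : ℝ →+* R) (x : Fin n → R)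
    (G : Finset (MvPolynomial (Fin n) ℝ)) (hG : ∀ g ∈ G, 0 ≤ eval₂ ι x g) :
    ∃ a : Fin n → ℝ, ∀ g ∈ G, 0 ≤ eval a g := by
  classical
  let k : Subfield ℝ := Subfield.closure (⋃ g ∈ G, (g.coeffs : Set ℝ))
  have hk : Countable k := countable_subfield_closure _
    (Set.Countable.biUnion G.countable_toSet fun g _ => g.coeffs.countable_toSet)
  obtain ⟨K, hKs, hKc, hKR⟩ := exists_countable_polyIVT_subfield hR
    (ι '' (k : Set ℝ) ∪ Set.range x)
    (((Set.countable_coe_iff.1 hk).image _).union (Set.countable_range x))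
  let j : k →+* K := (ι.comp k.subtype).codRestrict K fun c => hKs (Or.inl ⟨c, c.2, rfl⟩)
  let j' : k →+* Hyperreal := (seqHom.comp (Pi.constRingHom ℕ ℝ)).comp k.subtype
  let Γ₀ : Subring (K × Hyperreal) := (j.prod j').range
  obtain ⟨Γ, hΓ0, hΓ, hsurj⟩ := exists_embedding hKR polyIVT_hyperreal
    countablySaturated_hyperreal Γ₀ (by
      rintro _ ⟨c, rfl⟩
      have h1 : 0 < (j.prod j' c).1 ↔ 0 < (c : ℝ) := hom_real_pos ι c
      have h2 : 0 < (j.prod j' c).2 ↔ 0 < (c : ℝ) :=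
        hom_real_pos (seqHom.comp (Pi.constRingHom ℕ ℝ)) c
      rw [h1, h2])
  let xK : Fin n → K := fun i => ⟨x i, hKs (Or.inr ⟨i, rfl⟩)⟩
  choose y hy using fun i => hsurj (xK i)
  choose a ha using fun i => seqHom_surjective (y i)
  have hev : ∀ g ∈ G, ∀ᶠ N in Filter.hyperfilter ℕ, 0 ≤ eval (fun i => a i N) g := by
    intro g hg
    obtain ⟨g₀, rfl⟩ := (mem_range_map_iff_coeffs_subset (f := k.subtype) (x := g)).2 (by
      intro c hc
      exact ⟨⟨c, Subfield.subset_closure (Set.mem_biUnion hg hc)⟩, rfl⟩)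
    let e := eval₂ (j.prod j') (fun i => (xK i, y i)) g₀
    have he : e ∈ Γ := eval₂_mem (fun i _ => hΓ0 ⟨_, rfl⟩) hy
    have e1 : (e.1 : R) = eval₂ ι x (map k.subtype g₀) := by
      have := eval₂_comp_left (K.subtype.comp (RingHom.fst K Hyperreal)) (j.prod j')
        (fun i => (xK i, y i)) g₀
      rw [eval₂_map]
      exact this
    have e2 : e.2 = seqHom (fun N => eval (fun i => a i N) (map k.subtype g₀)) := by
      have h1 := eval₂_comp_left (RingHom.snd K Hyperreal) (j.prod j')
        (fun i => (xK i, y i)) g₀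
      have h2 : (fun N => eval (fun i => a i N) (map k.subtype g₀)) =
          eval₂ ((Pi.constRingHom ℕ ℝ).comp k.subtype) a g₀ := by
        ext N
        have := eval₂_comp_left (Pi.evalRingHom (fun _ : ℕ => ℝ) N)
          ((Pi.constRingHom ℕ ℝ).comp k.subtype) a g₀
        rw [eval_map]
        exact this.symm
      rw [h2, eval₂_comp_left]
      have h3 : (seqHom ∘ a) = y := funext ha
      rw [h3]
      exact h1
    have hnn : 0 ≤ e.2 := by
      by_contra hneg
      have h1 := hΓ (-e) (neg_mem he)
      have h2 : 0 < (-e).1 := h1.2 (by simpa using hneg)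
      have h3 : (e.1 : R) < 0 := by
        have : e.1 < 0 := by simpa using h2
        exact this
      rw [e1] at h3
      exact absurd (hG _ hg) (not_le.2 h3)
    rw [e2, ← map_zero seqHom, seqHom_le] at hnn
    exact hnn
  have hall : ∀ᶠ N in Filter.hyperfilter ℕ, ∀ g ∈ G, 0 ≤ eval (fun i => a i N) g :=
    (Filter.eventually_all_finset G).2 hev
  obtain ⟨N, hN⟩ := hall.exists
  exact ⟨_, hN⟩

/-- Krivine–Stengle: a preordering that contains finitely many real polynomials without common
point of nonnegativity contains `-1`. -/
theorem neg_one_mem_of_empty {n : ℕ} (T : Subsemiring (MvPolynomial (Fin n) ℝ))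
    (hsq : ∀ a, a * a ∈ T) (G : Finset (MvPolynomial (Fin n) ℝ)) (hG : ∀ g ∈ G, g ∈ T)
    (hempty : ∀ a : Fin n → ℝ, ∃ g ∈ G, eval a g < 0) : -1 ∈ T := by
  by_contra hT
  obtain ⟨F, _, _, _, φ, hφ⟩ := exists_orderedField T hsq hT
  obtain ⟨R, _, _, _, ψ, hψ, hR⟩ := exists_polyIVT_extension F
  obtain ⟨a, ha⟩ := exists_real_point hR ((ψ.comp φ).comp C) (fun i => ψ (φ (X i))) G (by
    intro g hg
    have h1 : eval₂ ((ψ.comp φ).comp C) (fun i => ψ (φ (X i))) g = ψ (φ g) := by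
      have := eval₂_comp_left (ψ.comp φ) C X g
      rw [eval₂_eta] at this
      exact this.symm
    rw [h1]
    exact hψ _ (hφ _ (hG g hg)))
  obtain ⟨g, hg, hlt⟩ := hempty a
  exact absurd (ha g hg) (not_le.2 hlt)

/-- A polynomial `h` that is positive on the basic closed set of `G` has a multiplier `s` in every
preordering `T` containing `G`, with `s h ∈ 1 + T`. -/
theorem exists_mul_eq_one_add {n : ℕ} (T : Subsemiring (MvPolynomial (Fin n) ℝ))
    (hsq : ∀ a, a * a ∈ T) (G : Finset (MvPolynomial (Fin n) ℝ)) (hG : ∀ g ∈ G, g ∈ T)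
    (h : MvPolynomial (Fin n) ℝ)
    (hpos : ∀ a : Fin n → ℝ, (∀ g ∈ G, 0 ≤ eval a g) → 0 < eval a h) :
    ∃ s ∈ T, ∃ t ∈ T, s * h = 1 + t := by
  classical
  have h1 : -1 ∈ adjoinCone T hsq (-h) := by
    refine neg_one_mem_of_empty _ (fun a => le_adjoinCone T hsq (-h) (hsq a)) (insert (-h) G) ?_ ?_
    · intro g hg
      rcases Finset.mem_insert.1 hg with rfl | hg
      · exact mem_adjoinCone T hsq _
      · exact le_adjoinCone T hsq _ (hG g hg)
    · intro a
      by_cases ha : ∀ g ∈ G, 0 ≤ eval a g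
      · exact ⟨-h, Finset.mem_insert_self _ _, by simpa using hpos a ha⟩
      · push Not at ha
        obtain ⟨g, hg, hlt⟩ := ha
        exact ⟨g, Finset.mem_insert_of_mem hg, hlt⟩
  obtain ⟨t, ht, s, hs, e⟩ := h1
  exact ⟨s, hs, t, ht, by linear_combination e⟩

end ArtinLang

/-! ### Boundedness modulo a preordering -/

section Preorderings
variable {E : Type} [CommRing E]

/-- The preordering generated by a family, as a subsemiring. -/
def preord {ι : Type} (g : ι → E) : Subsemiring E :=
  Subsemiring.closure ({x | ∃ a, x = a * a} ∪ Set.range g)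

lemma mul_self_mem_preord {ι : Type} (g : ι → E) (a : E) : a * a ∈ preord g :=
  Subsemiring.subset_closure (Or.inl ⟨a, rfl⟩)

lemma mem_preord {ι : Type} (g : ι → E) (i : ι) : g i ∈ preord g :=
  Subsemiring.subset_closure (Or.inr ⟨i, rfl⟩)

/-- The products `a² ∏ gⱼ ^ νⱼ` with `ν ∈ {0,1}^m` form a monoid, so sums of them form a semiring. -/
lemma preord_subset_genPreordering {m : ℕ} (g : Fin m → E) :
    (preord g : Set E) ⊆ genPreordering g := by
  classical
  let M : Submonoid E :=
    { carrier := {x | ∃ (a : E) (ν : Fin m → Bool), x = a * a * ∏ j, (if ν j then g j else 1)}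
      one_mem' := ⟨1, fun _ => false, by simp⟩
      mul_mem' := by
        rintro _ _ ⟨a, ν, rfl⟩ ⟨b, ν', rfl⟩
        refine ⟨a * b * ∏ j, (if (ν j && ν' j) then g j else 1), fun j => xor (ν j) (ν' j), ?_⟩
        have : (∏ j, (if ν j then g j else 1)) * (∏ j, (if ν' j then g j else 1)) =
            (∏ j, (if (ν j && ν' j) then g j else 1)) * (∏ j, (if (ν j && ν' j) then g j else 1)) *
              ∏ j, (if xor (ν j) (ν' j) then g j else 1) := by
          simp only [← Finset.prod_mul_distrib]
          refine Finset.prod_congr rfl fun j _ => ?_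
          cases ν j <;> cases ν' j <;> simp
        linear_combination (a * a * (b * b)) * this }
  have hM : ({x | ∃ a, x = a * a} ∪ Set.range g : Set E) ⊆ M := by
    rintro x (⟨a, rfl⟩ | ⟨i, rfl⟩)
    · exact ⟨a, fun _ => false, by simp⟩
    · exact ⟨1, fun j => decide (j = i), by simp⟩
  intro x hx
  rw [SetLike.mem_coe, preord, Subsemiring.mem_closure_iff] at hx
  refine AddSubmonoid.closure_induction (motive := fun x _ => x ∈ genPreordering g) ?_ ?_ ?_ hx
  · intro y hy
    obtain ⟨a, ν, rfl⟩ := Submonoid.closure_le.2 hM hy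
    refine ⟨Pi.single ν (a * a), fun ν' => ?_, ?_⟩
    · by_cases h : ν' = ν
      · subst h
        simp [IsSumSq.mul_self]
      · simp [h]
    · rw [Finset.sum_eq_single ν]
      · simp
      · intro b _ hb
        simp [hb]
      · simp
  · exact ⟨0, by simp, by simp⟩
  · rintro _ _ _ _ ⟨σ, hσ, rfl⟩ ⟨τ, hτ, rfl⟩
    exact ⟨σ + τ, fun ν => (hσ ν).add (hτ ν), by simp [add_mul, Finset.sum_add_distrib]⟩

variable [Algebra ℝ E]

lemma algebraMap_mem_of_nonneg {T : Subsemiring E} (hsq : ∀ a, a * a ∈ T) {c : ℝ} (hc : 0 ≤ c) :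
    algebraMap ℝ E c ∈ T := by
  rw [← Real.mul_self_sqrt hc, map_mul]
  exact hsq _

/-- Elements bounded above and below by real constants modulo the preordering `T`. -/
def boundedSub (T : Subsemiring E) (hsq : ∀ a, a * a ∈ T) : Subalgebra ℝ E where
  carrier := {b | ∃ c : ℝ, algebraMap ℝ E c - b ∈ T ∧ algebraMap ℝ E c + b ∈ T}
  mul_mem' := by
    rintro a b ⟨c, h1, h2⟩ ⟨d, h3, h4⟩
    have hh : algebraMap ℝ E (1 / 2) ∈ T := algebraMap_mem_of_nonneg hsq (by norm_num)
    have e : algebraMap ℝ E (1 / 2) * 2 = 1 := by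
      rw [← map_ofNat (algebraMap ℝ E) 2, ← map_mul]; norm_num
    refine ⟨c * d, ?_, ?_⟩
    · have : algebraMap ℝ E (c * d) - a * b = algebraMap ℝ E (1 / 2) *
          ((algebraMap ℝ E c - a) * (algebraMap ℝ E d + b) +
            (algebraMap ℝ E c + a) * (algebraMap ℝ E d - b)) := by
        rw [map_mul]
        linear_combination (-(algebraMap ℝ E c * algebraMap ℝ E d) + a * b) * e
      rw [this]
      exact mul_mem hh (add_mem (mul_mem h1 h4) (mul_mem h2 h3))
    · have : algebraMap ℝ E (c * d) + a * b = algebraMap ℝ E (1 / 2) *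
          ((algebraMap ℝ E c - a) * (algebraMap ℝ E d - b) +
            (algebraMap ℝ E c + a) * (algebraMap ℝ E d + b)) := by
        rw [map_mul]
        linear_combination (-(algebraMap ℝ E c * algebraMap ℝ E d) - a * b) * e
      rw [this]
      exact mul_mem hh (add_mem (mul_mem h1 h3) (mul_mem h2 h4))
  add_mem' := by
    rintro a b ⟨c, h1, h2⟩ ⟨d, h3, h4⟩
    refine ⟨c + d, ?_, ?_⟩
    · convert add_mem h1 h3 using 1
      rw [map_add]; ring
    · convert add_mem h2 h4 using 1
      rw [map_add]; ring
  algebraMap_mem' := by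
    intro r
    refine ⟨|r|, ?_, ?_⟩
    · rw [← map_sub]
      exact algebraMap_mem_of_nonneg hsq (by linarith [le_abs_self r])
    · rw [← map_add]
      exact algebraMap_mem_of_nonneg hsq (by linarith [neg_abs_le r])

lemma mem_boundedSub_of_sq {T : Subsemiring E} (hsq : ∀ a, a * a ∈ T) {b : E} {c : ℝ}
    (h : algebraMap ℝ E c - b * b ∈ T) : b ∈ boundedSub T hsq := by
  have hh : algebraMap ℝ E (1 / 2) ∈ T := algebraMap_mem_of_nonneg hsq (by norm_num)
  have e : algebraMap ℝ E (1 / 2) * 2 = 1 := by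
    rw [← map_ofNat (algebraMap ℝ E) 2, ← map_mul]; norm_num
  have e2 : algebraMap ℝ E ((c + 1) / 2) = algebraMap ℝ E (1 / 2) * (algebraMap ℝ E c + 1) := by
    rw [← map_one (algebraMap ℝ E), ← map_add, ← map_mul]; congr 1; ring
  refine ⟨(c + 1) / 2, ?_, ?_⟩
  · convert mul_mem hh (add_mem h (hsq (1 - b))) using 1
    rw [e2]; linear_combination b * e
  · convert mul_mem hh (add_mem h (hsq (1 + b))) using 1
    rw [e2]; linear_combination -b * e

/-- If `v ^ 2 ^ (j + 1)` is bounded above then so is `v`. -/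
lemma mem_boundedSub_of_pow {T : Subsemiring E} (hsq : ∀ a, a * a ∈ T) (v : E) (c : ℝ) :
    ∀ j : ℕ, algebraMap ℝ E c - v ^ 2 ^ (j + 1) ∈ T → v ∈ boundedSub T hsq := by
  intro j
  induction j generalizing c with
  | zero =>
    intro h
    exact mem_boundedSub_of_sq hsq (c := c) (by simpa [pow_two] using h)
  | succ j ih =>
    intro h
    have h1 : v ^ 2 ^ (j + 1) ∈ boundedSub T hsq := mem_boundedSub_of_sq hsq (c := c) (by
      rw [← pow_add, ← two_mul, ← pow_succ']; exact h)
    obtain ⟨c', h2, _⟩ := h1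
    exact ih c' h2

lemma mem_boundedSub_of_sum_sq {T : Subsemiring E} (hsq : ∀ a, a * a ∈ T) {n : ℕ} (x : Fin n → E)
    {c : ℝ} (h : algebraMap ℝ E c - ∑ i, x i * x i ∈ T) (i : Fin n) :
    algebraMap ℝ E c - x i * x i ∈ T := by
  classical
  rw [← Finset.add_sum_erase _ _ (Finset.mem_univ i)] at h
  convert add_mem h (Subsemiring.sum_mem T (t := Finset.univ.erase i)
    (f := fun j => x j * x j) fun j _ => hsq _) using 1
  ring

end Preorderings

/-- Homogenization: for all large `m`, `v ^ m f(x)` is a polynomial in `v` and the `x i * v`. -/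
lemma exists_homogenization {n : ℕ} (f : MvPolynomial (Fin n) ℝ) :
    ∃ m₀, ∀ m ≥ m₀, ∃ F : MvPolynomial (Fin (n + 1)) ℝ,
      ∀ (A : Type) [CommRing A] [Algebra ℝ A] (x : Fin n → A) (v : A),
        aeval (Fin.cons v (fun i => x i * v) : Fin (n + 1) → A) F = v ^ m * aeval x f := by
  induction f using MvPolynomial.induction_on with
  | C a =>
    refine ⟨0, fun m _ => ⟨C a * X 0 ^ m, fun A _ _ x v => ?_⟩⟩
    simp [mul_comm]
  | add f g hf hg =>
    obtain ⟨m₁, h1⟩ := hf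
    obtain ⟨m₂, h2⟩ := hg
    refine ⟨max m₁ m₂, fun m hm => ?_⟩
    obtain ⟨F, hF⟩ := h1 m ((le_max_left _ _).trans hm)
    obtain ⟨G, hG⟩ := h2 m ((le_max_right _ _).trans hm)
    exact ⟨F + G, fun A _ _ x v => by rw [map_add, hF, hG, map_add, mul_add]⟩
  | mul_X f i hf =>
    obtain ⟨m₁, h1⟩ := hf
    refine ⟨m₁ + 1, fun m hm => ?_⟩
    obtain ⟨m, rfl⟩ : ∃ k, m = k + 1 := ⟨m - 1, by omega⟩
    obtain ⟨F, hF⟩ := h1 m (by omega)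
    refine ⟨F * X i.succ, fun A _ _ x v => ?_⟩
    rw [map_mul, hF, map_mul, aeval_X, aeval_X, Fin.cons_succ]
    ring

/-- Let `v` be the inverse of `p`. If `T` contains certificates that `k p - |X|²` and `p - 1/2` are
positive, then the elements `v ^ (N + 1)` and `Xᵢ v ^ (N + 1)` are bounded modulo `T` for some `N`.

Let `T₁` be generated by `T` and the two positive polynomials `h` and `h'`. Modulo `T₁` the elements
`v` and `Xᵢ v` are visibly bounded. The element `e = (1 + t) (1 + t')` multiplies `T₁` into `T`, and
`e v ^ (2 N)` is bounded modulo `T₁` since it is a polynomial in `v` and the `Xᵢ v`. Hence it is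
bounded modulo `T`, and so is `v ^ (2 N)` because `e - 1 ∈ T`. -/
lemma exists_bounded_chart {n : ℕ} {E : Type} [CommRing E] [Algebra ℝ E]
    (T : Subsemiring E) (hsq : ∀ a, a * a ∈ T) (φ : MvPolynomial (Fin n) ℝ →ₐ[ℝ] E)
    (p s t s' t' : MvPolynomial (Fin n) ℝ) (k : ℝ) (hk : 0 ≤ k)
    (hs : φ s ∈ T) (ht : φ t ∈ T) (hs' : φ s' ∈ T) (ht' : φ t' ∈ T)
    (h1 : s * (C k * p - ∑ i, X i * X i) = 1 + t)
    (h2 : s' * (p - C (1 / 2)) = 1 + t') (v : E) (hv : v * φ p = 1) :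
    ∃ N : ℕ, v ^ (N + 1) ∈ boundedSub T hsq ∧
      ∀ i, φ (X i) * v ^ (N + 1) ∈ boundedSub T hsq := by
  let h := φ (C k * p - ∑ i, X i * X i)
  let h' := φ (p - C (1 / 2))
  let e := (1 + t) * (1 + t')
  have g1 : φ s * h = 1 + φ t := by rw [← map_mul, h1, map_add, map_one]
  have g2 : φ s' * h' = 1 + φ t' := by rw [← map_mul, h2, map_add, map_one]
  have hC : ∀ c : ℝ, φ (C c) = algebraMap ℝ E c := fun c => φ.commutes c
  have he : φ e = (1 + φ t) * (1 + φ t') := by simp [e]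
  let S := adjoinCone T hsq h
  have hsqS : ∀ a, a * a ∈ S := fun a => le_adjoinCone T hsq h (hsq a)
  let T₁ := adjoinCone S hsqS h'
  have hST₁ : S ≤ T₁ := le_adjoinCone S hsqS h'
  have hsq₁ : ∀ a, a * a ∈ T₁ := fun a => hST₁ (hsqS a)
  have hhT : h ∈ T₁ := hST₁ (mem_adjoinCone T hsq h)
  have hhT' : h' ∈ T₁ := mem_adjoinCone S hsqS _
  -- `e` clears the denominators of `T₁`
  have hclear : ∀ a ∈ T₁, φ e * a ∈ T := by
    rintro _ ⟨_, ⟨a, ha, b, hb, rfl⟩, _, ⟨c, hc, d, hd, rfl⟩, rfl⟩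
    have m1 : 1 + φ t ∈ T := add_mem (one_mem _) ht
    have m2 : 1 + φ t' ∈ T := add_mem (one_mem _) ht'
    have m3 : (1 + φ t) * h ∈ T := by
      rw [← g1, mul_assoc]; exact mul_mem hs (hsq h)
    have m4 : (1 + φ t') * h' ∈ T := by
      rw [← g2, mul_assoc]; exact mul_mem hs' (hsq h')
    have : φ e * (a + h * b + h' * (c + h * d)) =
        (1 + φ t) * (1 + φ t') * a + ((1 + φ t) * h) * (1 + φ t') * b +
          (1 + φ t) * ((1 + φ t') * h') * c + ((1 + φ t) * h) * ((1 + φ t') * h') * d := by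
      rw [he]; ring
    rw [this]
    exact add_mem (add_mem (add_mem (mul_mem (mul_mem m1 m2) ha) (mul_mem (mul_mem m3 m2) hb))
      (mul_mem (mul_mem m1 m4) hc)) (mul_mem (mul_mem m3 m4) hd)
  -- `1 - (v - 1)² = 2 v² (p - 1/2)`
  have hvB : v ∈ boundedSub T₁ hsq₁ := by
    have m1 : algebraMap ℝ E 1 - (v - 1) * (v - 1) ∈ T₁ := by
      have := mul_mem (algebraMap_mem_of_nonneg hsq₁ (zero_le_two)) (mul_mem (hsq₁ v) hhT')
      convert this using 1
      have e1 : algebraMap ℝ E (1 / 2) * 2 = 1 := by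
        rw [← map_ofNat (algebraMap ℝ E) 2, ← map_mul]; norm_num
      simp only [h', map_sub, hC, map_one, map_ofNat]
      linear_combination (-2 * v) * hv + v * v * e1
    have := add_mem (mem_boundedSub_of_sq hsq₁ m1) (one_mem _)
    simpa using this
  have hxB : ∃ c : ℝ, ∀ i, algebraMap ℝ E c - (φ (X i) * v) * (φ (X i) * v) ∈ T₁ := by
    obtain ⟨c, hc, _⟩ := hvB
    refine ⟨k * c, fun i => ?_⟩
    refine mem_boundedSub_of_sum_sq hsq₁ (fun i => φ (X i) * v) (c := k * c) ?_ i
    have := add_mem (mul_mem (algebraMap_mem_of_nonneg hsq₁ hk) hc) (mul_mem (hsq₁ v) hhT)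
    convert this using 1
    have e3 : ∑ i, (φ (X i) * v) * (φ (X i) * v) = v * v * ∑ i, φ (X i) * φ (X i) := by
      rw [Finset.mul_sum]
      exact Finset.sum_congr rfl fun i _ => by ring
    simp only [h, map_sub, hC, map_mul, map_sum, e3]
    linear_combination (-algebraMap ℝ E k * v) * hv
  obtain ⟨c₁, hc₁⟩ := hxB
  have hxB : ∀ i, φ (X i) * v ∈ boundedSub T₁ hsq₁ := fun i => mem_boundedSub_of_sq hsq₁ (hc₁ i)
  obtain ⟨m₀, hm₀⟩ := exists_homogenization e
  let N := 2 ^ m₀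
  have hN : m₀ ≤ 2 * N := by
    have : m₀ < 2 ^ m₀ := Nat.lt_two_pow_self
    simp only [N]; omega
  obtain ⟨F, hF⟩ := hm₀ (2 * N) hN
  let θ := φ e * (v ^ N * v ^ N)
  have hθB : θ ∈ boundedSub T₁ hsq₁ := by
    have e1 : θ = aeval (Fin.cons v (fun i => φ (X i) * v) : Fin (n + 1) → E) F := by
      rw [hF E (fun i => φ (X i)) v]
      have : aeval (fun i => φ (X i)) e = φ e := by
        exact (DFunLike.congr_fun (MvPolynomial.aeval_unique φ) e).symm
      rw [this]
      simp only [θ]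
      ring
    rw [e1]
    refine MvPolynomial.eval₂_mem (s := boundedSub T₁ hsq₁)
      (fun i _ => Subalgebra.algebraMap_mem _ _) ?_
    intro i
    refine Fin.cases ?_ (fun i => ?_) i
    · exact hvB
    · exact hxB i
  obtain ⟨c, hc, _⟩ := hθB
  -- `θ (c - θ) ∈ T`, and completing the square bounds `θ`
  have hθT : θ ∈ boundedSub T hsq := by
    have m1 := mul_mem (hclear _ hc) (hsq (v ^ N))
    have m2 : algebraMap ℝ E ((c / 2) * (c / 2)) - (θ - algebraMap ℝ E (c / 2)) *
        (θ - algebraMap ℝ E (c / 2)) ∈ T := by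
      convert m1 using 1
      have : algebraMap ℝ E c = algebraMap ℝ E (c / 2) + algebraMap ℝ E (c / 2) := by
        rw [← map_add]; congr 1; ring
      rw [this, map_mul]
      simp only [θ]
      ring
    have := add_mem (mem_boundedSub_of_sq hsq m2) (Subalgebra.algebraMap_mem _ (c / 2))
    simpa using this
  obtain ⟨c₂, hc₂, _⟩ := hθT
  have hτ : φ e - 1 ∈ T := by
    have : φ e - 1 = φ t + φ t' + φ t * φ t' := by rw [he]; ring
    rw [this]
    exact add_mem (add_mem ht ht') (mul_mem ht ht')
  have hvT : v ∈ boundedSub T hsq := by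
    refine mem_boundedSub_of_pow hsq v c₂ m₀ ?_
    convert add_mem hc₂ (mul_mem hτ (hsq (v ^ N))) using 1
    have : v ^ 2 ^ (m₀ + 1) = v ^ N * v ^ N := by
      rw [← pow_add]; congr 1; simp only [N]; ring
    rw [this]
    simp only [θ]
    ring
  refine ⟨N, pow_mem hvT _, fun i => ?_⟩
  have hc₁' : 0 ≤ max c₁ 0 := le_max_right _ _
  have hx2 : algebraMap ℝ E (max c₁ 0) - (φ (X i) * v) * (φ (X i) * v) ∈ T₁ := by
    convert add_mem (hc₁ i) (algebraMap_mem_of_nonneg hsq₁ (c := max c₁ 0 - c₁)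
      (by linarith [le_max_left c₁ 0])) using 1
    rw [map_sub]; ring
  refine mem_boundedSub_of_sq hsq (c := max c₁ 0 * c₂) ?_
  have m1 := mul_mem (hclear _ hx2) (hsq (v ^ N))
  have m2 := mul_mem (algebraMap_mem_of_nonneg hsq hc₁') hc₂
  have m3 := mul_mem hτ (hsq (v ^ N * (φ (X i) * v)))
  convert add_mem (add_mem m1 m2) m3 using 1
  rw [map_mul]
  simp only [θ]
  ring

/-! ### Positive functionals on polynomials over a cube -/

/-- The cube `[-c, c]^N`. -/
def box (N : ℕ) (c : ℝ) : Set (Fin N → ℝ) := {y | ∀ j, |y j| ≤ c}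

lemma isCompact_box (N : ℕ) (c : ℝ) : IsCompact (box N c) := by
  have : box N c = Set.pi Set.univ fun _ => Set.Icc (-c) c := by
    ext y
    simp only [box, abs_le, Set.mem_pi, Set.mem_univ, true_imp_iff,
      Set.mem_Icc, Set.mem_ofPred_eq]
  rw [this]
  exact isCompact_univ_pi fun _ => isCompact_Icc

/-- A polynomial positive on the cube belongs to any preordering modulo which the coordinates are
bounded by `c` (Schmüdgen's theorem for the cube). -/
lemma aeval_mem_of_box_pos {N : ℕ} {E : Type} [CommRing E] [Algebra ℝ E] (T : Subsemiring E)
    (hsq : ∀ a, a * a ∈ T) (b : Fin N → E) (c : ℝ)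
    (hb : ∀ j, algebraMap ℝ E c - b j ∈ T ∧ algebraMap ℝ E c + b j ∈ T)
    (F : MvPolynomial (Fin N) ℝ) (hF : ∀ y ∈ box N c, 0 < eval y F) : aeval b F ∈ T := by
  classical
  let T' : Subsemiring (MvPolynomial (Fin N) ℝ) := T.comap (aeval b : _ →ₐ[ℝ] E).toRingHom
  have hmem : ∀ f, f ∈ T' ↔ aeval b f ∈ T := fun f => Iff.rfl
  have hsq' : ∀ a, a * a ∈ T' := fun a => by rw [hmem, map_mul]; exact hsq _
  have hX : ∀ j, algebraMap ℝ _ c - X j ∈ T' ∧ algebraMap ℝ _ c + X j ∈ T' := fun j => by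
    simpa [hmem] using hb j
  obtain ⟨s, hs, t, ht, hst⟩ := exists_mul_eq_one_add T' hsq'
    (Finset.univ.image (fun j => algebraMap ℝ (MvPolynomial (Fin N) ℝ) c - X j) ∪
      Finset.univ.image (fun j => algebraMap ℝ (MvPolynomial (Fin N) ℝ) c + X j))
    (by
      intro g hg
      simp only [Finset.mem_union, Finset.mem_image, Finset.mem_univ, true_and] at hg
      rcases hg with ⟨j, rfl⟩ | ⟨j, rfl⟩
      · exact (hX j).1
      · exact (hX j).2) F
    (by
      intro y hy
      refine hF y fun j => abs_le.2 ⟨?_, ?_⟩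
      · have := hy (algebraMap ℝ _ c + X j) (by simp)
        simp [algebraMap_eq] at this
        linarith
      · have := hy (algebraMap ℝ _ c - X j) (by simp)
        simpa [algebraMap_eq] using this)
  have harch : ∀ f, f ∈ boundedSub T' hsq' := by
    intro f
    induction f using MvPolynomial.induction_on with
    | C a => exact Subalgebra.algebraMap_mem _ a
    | add f g hf hg => exact add_mem hf hg
    | mul_X f i hf => exact mul_mem hf ⟨c, hX i⟩
  obtain ⟨r₀, hr₀, _⟩ := harch s
  obtain ⟨r, hr, hrs⟩ : ∃ r : ℝ, 0 < r ∧ algebraMap ℝ _ r - s ∈ T' := by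
    refine ⟨max r₀ 1, by positivity, ?_⟩
    convert add_mem hr₀ (algebraMap_mem_of_nonneg hsq' (c := max r₀ 1 - r₀)
      (by linarith [le_max_left r₀ 1])) using 1
    rw [map_sub]; ring
  -- With `s F = 1 + t`, the combination `(r - s) (F + ρ) + t + ρ s = r (F + ρ) - 1` lies in the
  -- preordering, so each step lowers the constant needed to push `F` into it by `1 / r`.
  have hstep : ∀ ρ : ℝ, 0 ≤ ρ → F + algebraMap ℝ _ ρ ∈ T' →
      F + algebraMap ℝ _ (ρ - 1 / r) ∈ T' := by
    intro ρ hρ h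
    have m1 := add_mem (add_mem (mul_mem hrs h) ht)
      (mul_mem (algebraMap_mem_of_nonneg hsq' hρ) hs)
    have m2 := mul_mem (algebraMap_mem_of_nonneg hsq' (c := 1 / r) (by positivity)) m1
    convert m2 using 1
    have e : algebraMap ℝ (MvPolynomial (Fin N) ℝ) (1 / r) * algebraMap ℝ _ r = 1 := by
      rw [← map_mul, one_div_mul_cancel hr.ne', map_one]
    rw [map_sub]
    linear_combination (-F - algebraMap ℝ _ ρ) * e + (algebraMap ℝ _ (1 / r)) * hst
  have hneg : ∀ ρ : ℝ, ρ ≤ 0 → F + algebraMap ℝ _ ρ ∈ T' → F ∈ T' := by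
    intro ρ hρ h
    convert add_mem h (algebraMap_mem_of_nonneg hsq' (c := -ρ) (by linarith)) using 1
    rw [map_neg]; ring
  have hiter : ∀ (k : ℕ) (ρ : ℝ), ρ ≤ k * (1 / r) → F + algebraMap ℝ _ ρ ∈ T' → F ∈ T' := by
    intro k
    induction k with
    | zero => intro ρ hρ h; exact hneg ρ (by simpa using hρ) h
    | succ k ih =>
      intro ρ hρ h
      by_cases h0 : ρ ≤ 0
      · exact hneg ρ h0 h
      · refine ih (ρ - 1 / r) ?_ (hstep ρ (by linarith) h)
        push_cast at hρ
        linarith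
  obtain ⟨ρ, _, hρ⟩ := harch F
  obtain ⟨k, hk⟩ := exists_nat_ge (ρ / (1 / r))
  refine hiter k ρ ?_ (by rw [add_comm]; exact hρ)
  rwa [div_le_iff₀ (by positivity)] at hk

/-- Stone–Weierstrass on the cube. -/
lemma exists_poly_near {N : ℕ} (c : ℝ) (f : (Fin N → ℝ) → ℝ) (hf : Continuous f) {ε : ℝ}
    (hε : 0 < ε) : ∃ F : MvPolynomial (Fin N) ℝ, ∀ y ∈ box N c, |eval y F - f y| < ε := by
  let e : MvPolynomial (Fin N) ℝ →ₐ[ℝ] C(Fin N → ℝ, ℝ) :=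
    aeval fun j => ⟨fun y => y j, continuous_apply j⟩
  have he : ∀ F y, e F y = eval y F := by
    intro F y
    induction F using MvPolynomial.induction_on with
    | C a => simp [e]
    | add f g hf hg => simp [map_add, hf, hg]
    | mul_X f i hf => rw [map_mul, map_mul, ContinuousMap.mul_apply, hf]; simp [e]
  have hsep : e.range.SeparatesPoints := by
    intro x y hxy
    obtain ⟨j, hj⟩ := Function.ne_iff.1 hxy
    refine ⟨e (X j), ⟨e (X j), ⟨X j, rfl⟩, rfl⟩, ?_⟩
    simpa [he] using hj
  obtain ⟨g, ⟨F, rfl⟩, hg⟩ :=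
    ContinuousMap.exists_mem_subalgebra_near_continuous_of_isCompact_of_separatesPoints hsep
      ⟨f, hf⟩ (isCompact_box N c) hε
  refine ⟨F, fun y hy => ?_⟩
  have := hg y hy
  simpa [Real.norm_eq_abs, he] using this

lemma ae_mem_box {N : ℕ} {c : ℝ} {ν : Measure (Fin N → ℝ)} (h : ν (box N c)ᶜ = 0) :
    ∀ᵐ y ∂ν, y ∈ box N c := h

lemma integrable_of_box {N : ℕ} {c : ℝ} {ν : Measure (Fin N → ℝ)} [IsFiniteMeasure ν]
    (h : ν (box N c)ᶜ = 0) (f : (Fin N → ℝ) → ℝ) (hf : Continuous f) : Integrable f ν := by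
  obtain ⟨M, hM⟩ := (isCompact_box N c).exists_bound_of_continuousOn hf.continuousOn
  refine Integrable.of_bound hf.aestronglyMeasurable M ?_
  filter_upwards [ae_mem_box h] with y hy using hM y hy

lemma continuous_eval_poly {N : ℕ} (F : MvPolynomial (Fin N) ℝ) :
    Continuous fun y : Fin N → ℝ => eval y F := MvPolynomial.continuous_eval F

lemma abs_integral_sub_le {N : ℕ} {c : ℝ} {ν : Measure (Fin N → ℝ)} [IsFiniteMeasure ν]
    (h : ν (box N c)ᶜ = 0) (f g : (Fin N → ℝ) → ℝ) (hf : Continuous f) (hg : Continuous g)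
    {ε : ℝ} (hfg : ∀ y ∈ box N c, |f y - g y| ≤ ε) :
    |∫ y, f y ∂ν - ∫ y, g y ∂ν| ≤ ε * ν.real Set.univ := by
  rw [← integral_sub (integrable_of_box h f hf) (integrable_of_box h g hg)]
  refine norm_integral_le_of_norm_le_const (f := fun y => f y - g y) ?_
  filter_upwards [ae_mem_box h] with y hy using hfg y hy

/-- Finite measures on the cube are determined by their polynomial moments. -/
lemma measure_ext_of_box {N : ℕ} {c : ℝ} {ν₁ ν₂ : Measure (Fin N → ℝ)} [IsFiniteMeasure ν₁]
    [IsFiniteMeasure ν₂] (h₁ : ν₁ (box N c)ᶜ = 0) (h₂ : ν₂ (box N c)ᶜ = 0)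
    (h : ∀ F : MvPolynomial (Fin N) ℝ, ∫ y, eval y F ∂ν₁ = ∫ y, eval y F ∂ν₂) : ν₁ = ν₂ := by
  refine ext_of_forall_integral_eq_of_IsFiniteMeasure fun f => ?_
  refine eq_of_abs_sub_le_all fun ε hε => ?_
  let M := ν₁.real Set.univ + ν₂.real Set.univ + 1
  have hM : 0 < M := by positivity
  obtain ⟨F, hF⟩ := exists_poly_near c f f.continuous (div_pos hε hM)
  have e1 := abs_integral_sub_le h₁ _ _ (continuous_eval_poly F) f.continuous
    fun y hy => (hF y hy).le
  have e2 := abs_integral_sub_le h₂ _ _ (continuous_eval_poly F) f.continuous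
    fun y hy => (hF y hy).le
  rw [h F] at e1
  have e3 : ε / M * ν₁.real Set.univ + ε / M * ν₂.real Set.univ ≤ ε := by
    have : ε = ε / M * M := (div_mul_cancel₀ _ hM.ne').symm
    have h4 : 0 < ε / M := div_pos hε hM
    nlinarith
  rw [abs_le] at *
  constructor <;> linarith [e1.1, e1.2, e2.1, e2.2]

/-- Haviland's theorem for the cube: M. Riesz extension from polynomials to continuous functions,
followed by the Riesz–Markov–Kakutani theorem. -/
lemma exists_box_measure {N : ℕ} (c : ℝ) (Λ : MvPolynomial (Fin N) ℝ →ₗ[ℝ] ℝ)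
    (hΛ : ∀ F, (∀ y ∈ box N c, 0 < eval y F) → 0 ≤ Λ F) :
    ∃ ν : Measure (Fin N → ℝ), IsFiniteMeasure ν ∧ ν (box N c)ᶜ = 0 ∧
      ∀ F, ∫ y, eval y F ∂ν = Λ F := by
  have hΛ' : ∀ F, (∀ y ∈ box N c, 0 ≤ eval y F) → 0 ≤ Λ F := by
    intro F hF
    refine le_of_forall_pos_le_add fun ε hε => ?_
    have h1 : 0 ≤ Λ 1 := hΛ 1 fun y _ => by simp
    have := hΛ (F + C (ε / (Λ 1 + 1))) fun y hy => by
      have := hF y hy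
      simp only [map_add, eval_C]
      positivity
    rw [map_add, ← mul_one (C _), ← smul_eq_C_mul, map_smul, smul_eq_mul] at this
    refine this.trans ?_
    gcongr
    rw [div_mul_eq_mul_div, div_le_iff₀ (by positivity)]
    nlinarith
  let K := box N c
  have : CompactSpace K := isCompact_iff_compactSpace.1 (isCompact_box N c)
  let e : MvPolynomial (Fin N) ℝ →ₗ[ℝ] C(K, ℝ) :=
    { toFun := fun F =>
        { toFun := fun y => eval (y : Fin N → ℝ) F
          continuous_toFun := (continuous_eval_poly F).comp continuous_subtype_val }
      map_add' := fun F G => by ext y; simp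
      map_smul' := fun a F => by ext y; simp [smul_eval] }
  have he : ∀ F (y : K), e F y = eval (y : Fin N → ℝ) F := fun F y => rfl
  obtain ⟨σ, hσ⟩ := LinearMap.exists_rightInverse_of_surjective e.rangeRestrict
    (LinearMap.range_rangeRestrict e)
  have hσ' : ∀ x : LinearMap.range e, e (σ x) = x := fun x =>
    congrArg Subtype.val (LinearMap.congr_fun hσ x)
  let s : PointedCone ℝ C(K, ℝ) :=
    { carrier := {f | ∀ y, 0 ≤ f y}
      add_mem' := fun {f g} hf hg y => add_nonneg (hf y) (hg y)
      zero_mem' := fun y => le_rfl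
      smul_mem' := fun a f hf y => mul_nonneg a.2 (hf y) }
  obtain ⟨Φ, hΦ1, hΦ2⟩ := riesz_extension s ⟨LinearMap.range e, Λ.comp σ⟩
    (fun x hx => hΛ' _ fun y hy => by
      have := hx ⟨y, hy⟩
      rwa [← hσ' x] at this)
    (fun f => by
      obtain ⟨M, hM⟩ := (isCompact_univ (X := K)).exists_bound_of_continuousOn
        f.continuous.continuousOn
      refine ⟨⟨e (C M), LinearMap.mem_range_self _ _⟩, fun y => ?_⟩
      have := hM y trivial
      rw [Real.norm_eq_abs, abs_le] at this
      change 0 ≤ eval (y : Fin N → ℝ) (C M) + f y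
      rw [eval_C]
      linarith [this.1])
  have hΦe : ∀ F, Φ (e F) = Λ F := by
    intro F
    have h1 : Φ (e F) = Λ (σ ⟨e F, LinearMap.mem_range_self _ _⟩) :=
      hΦ1 ⟨e F, LinearMap.mem_range_self _ _⟩
    set G := σ ⟨e F, LinearMap.mem_range_self _ _⟩
    have hG : e G = e F := hσ' _
    have hv : ∀ y ∈ box N c, eval y G = eval y F := fun y hy => by
      rw [← he G ⟨y, hy⟩, hG, he]
    have l1 := hΛ' (G - F) fun y hy => by simp [hv y hy]
    have l2 := hΛ' (F - G) fun y hy => by simp [hv y hy]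
    rw [map_sub] at l1 l2
    linarith
  let Ψ : CompactlySupportedContinuousMap K ℝ →ₚ[ℝ] ℝ :=
    PositiveLinearMap.mk₀
      { toFun := fun f => Φ (f : C(K, ℝ))
        map_add' := fun f g => Φ.map_add f g
        map_smul' := fun a f => Φ.map_smul a f }
      fun f hf => hΦ2 f fun y => hf y
  let ν := RealRMK.rieszMeasure Ψ
  have : IsFiniteMeasure ν := by infer_instance
  refine ⟨ν.map Subtype.val, inferInstance, ?_, fun F => ?_⟩
  · rw [Measure.map_apply measurable_subtype_coe (isCompact_box N c).measurableSet.compl]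
    convert measure_empty (μ := ν)
    ext y
    simp
  · rw [integral_map measurable_subtype_coe.aemeasurable
      (continuous_eval_poly F).aestronglyMeasurable, ← hΦe]
    exact RealRMK.integral_rieszMeasure Ψ (CompactlySupportedContinuousMap.continuousMapEquiv (e F))

/-! ### Representing measures on the cube -/

section Chart
variable {N : ℕ} {E : Type} [CommRing E] [Algebra ℝ E]

/-- `ν` represents the functional `F ↦ L (u² F(b))` and lives on the cube `[-c, c]^N`. Here `u` ranges
over the whole ring while only the coordinates `b` are bounded modulo the preordering. -/
structure Represents (L : E →ₗ[ℝ] ℝ) (b : Fin N → E) (c : ℝ) (u : E)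
    (ν : Measure (Fin N → ℝ)) : Prop where
  finite : IsFiniteMeasure ν
  box_null : ν (box N c)ᶜ = 0
  integral_eq : ∀ F : MvPolynomial (Fin N) ℝ, ∫ y, eval y F ∂ν = L (u * u * aeval b F)

lemma exists_represents (T : Subsemiring E) (hsq : ∀ a, a * a ∈ T) (L : E →ₗ[ℝ] ℝ)
    (hL : ∀ t ∈ T, 0 ≤ L t) (b : Fin N → E) (c : ℝ)
    (hb : ∀ j, algebraMap ℝ E c - b j ∈ T ∧ algebraMap ℝ E c + b j ∈ T) (u : E) :
    ∃ ν, Represents L b c u ν := by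
  obtain ⟨ν, h1, h2, h3⟩ := exists_box_measure c
    (L.comp ((LinearMap.mulLeft ℝ (u * u)).comp (aeval b : _ →ₐ[ℝ] E).toLinearMap))
    (fun F hF => hL _ (mul_mem (hsq u) (aeval_mem_of_box_pos T hsq b c hb F hF)))
  exact ⟨ν, h1, h2, h3⟩

/-- If `u P(b) = 1` then the representing measures of `L` and `L (u² ·)` differ by the density
`P²`. -/
lemma Represents.eq_withDensity {L : E →ₗ[ℝ] ℝ} {b : Fin N → E} {c : ℝ} {u v : E}
    {ν ν' : Measure (Fin N → ℝ)} (h : Represents L b c v ν) (h' : Represents L b c (v * u) ν')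
    (P : MvPolynomial (Fin N) ℝ) (hP : u * aeval b P = 1) :
    ν = ν'.withDensity fun y => ((Real.toNNReal (eval y P ^ 2) : NNReal) : ENNReal) := by
  have := h.finite
  have := h'.finite
  have hc : Continuous fun y : Fin N → ℝ => eval y P ^ 2 := (continuous_eval_poly P).pow 2
  have hm : Measurable fun y : Fin N → ℝ => Real.toNNReal (eval y P ^ 2) :=
    (continuous_real_toNNReal.comp hc).measurable
  have : IsFiniteMeasure
      (ν'.withDensity fun y => ((Real.toNNReal (eval y P ^ 2) : NNReal) : ENNReal)) :=
    isFiniteMeasure_withDensity_ofReal (integrable_of_box h'.box_null _ hc).2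
  refine measure_ext_of_box h.box_null (withDensity_absolutelyContinuous _ _ h'.box_null)
    fun F => ?_
  rw [integral_withDensity_eq_integral_smul hm, h.integral_eq]
  have : ∀ y : Fin N → ℝ, Real.toNNReal (eval y P ^ 2) • eval y F = eval y (P ^ 2 * F) := by
    intro y
    rw [NNReal.smul_def, Real.coe_toNNReal _ (sq_nonneg _), smul_eq_mul, map_mul, map_pow]
  simp only [this]
  rw [h'.integral_eq, map_mul (aeval b), map_pow (aeval b)]
  congr 1
  linear_combination (-v * v * aeval b F * (u * aeval b P + 1)) * hP

/-- A polynomial `P` for which `P(b)` is invertible vanishes only on a null set. -/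
lemma Represents.zero_null {L : E →ₗ[ℝ] ℝ} {b : Fin N → E} {c : ℝ} {u v : E}
    {ν ν' : Measure (Fin N → ℝ)} (h : Represents L b c v ν) (h' : Represents L b c (v * u) ν')
    (P : MvPolynomial (Fin N) ℝ) (hP : u * aeval b P = 1) : ν {y | eval y P = 0} = 0 := by
  rw [h.eq_withDensity h' P hP]
  have hms : MeasurableSet {y : Fin N → ℝ | eval y P = 0} :=
    (isClosed_singleton.preimage (continuous_eval_poly P)).measurableSet
  rw [withDensity_apply _ hms]
  refine (setLIntegral_congr_fun hms (g := fun _ => 0) fun y hy => ?_).trans (by simp)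
  have hyP : eval y P = 0 := hy
  simp [hyP]

/-- Division by `P²` is multiplication by `u²`, where `u` is the inverse of `P(b)`. The third measure
serves to show that the zeros of `P` are null for `ν'`. -/
lemma Represents.integral_div {L : E →ₗ[ℝ] ℝ} {b : Fin N → E} {c : ℝ} {u v : E}
    {ν ν' ν'' : Measure (Fin N → ℝ)} (h : Represents L b c v ν) (h' : Represents L b c (v * u) ν')
    (h'' : Represents L b c (v * u * u) ν'')
    (P : MvPolynomial (Fin N) ℝ) (hP : u * aeval b P = 1) (F : MvPolynomial (Fin N) ℝ) :
    Integrable (fun y => eval y F / eval y P ^ 2) ν ∧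
      ∫ y, eval y F / eval y P ^ 2 ∂ν = L (v * u * (v * u) * aeval b F) := by
  have := h'.finite
  have h0 := h'.zero_null h'' P hP
  have hc : Continuous fun y : Fin N → ℝ => eval y P ^ 2 := (continuous_eval_poly P).pow 2
  have hm : Measurable fun y : Fin N → ℝ => Real.toNNReal (eval y P ^ 2) :=
    (continuous_real_toNNReal.comp hc).measurable
  have hae : (fun y : Fin N → ℝ => Real.toNNReal (eval y P ^ 2) • (eval y F / eval y P ^ 2))
      =ᵐ[ν'] fun y => eval y F := by
    have : ∀ᵐ y ∂ν', ¬ eval y P = 0 := by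
      rw [ae_iff]; simpa using h0
    filter_upwards [this] with y hy
    rw [NNReal.smul_def, Real.coe_toNNReal _ (sq_nonneg _), smul_eq_mul]
    field_simp
  rw [h.eq_withDensity h' P hP, integrable_withDensity_iff_integrable_smul hm,
    integral_withDensity_eq_integral_smul hm, integrable_congr hae, integral_congr_ae hae]
  exact ⟨integrable_of_box h'.box_null _ (continuous_eval_poly F), h'.integral_eq F⟩

/-- A polynomial `G` with `L (a² G(b)) ≥ 0` for all `a` is nonnegative almost everywhere: take for `a`
polynomials whose squares approximate the negative part of `G`. -/
lemma Represents.ae_nonneg {L : E →ₗ[ℝ] ℝ} {b : Fin N → E} {c : ℝ}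
    {ν : Measure (Fin N → ℝ)} (h : Represents L b c 1 ν) (G : MvPolynomial (Fin N) ℝ)
    (hG : ∀ a, 0 ≤ L (a * a * aeval b G)) : ∀ᵐ y ∂ν, 0 ≤ eval y G := by
  have := h.finite
  have hGc := continuous_eval_poly G
  let φ : (Fin N → ℝ) → ℝ := fun y => √(max (-eval y G) 0)
  have hφ : Continuous φ := Real.continuous_sqrt.comp (hGc.neg.max continuous_const)
  have hpoly : ∀ F : MvPolynomial (Fin N) ℝ, 0 ≤ ∫ y, eval y F ^ 2 * eval y G ∂ν := by
    intro F
    have e : ∀ y : Fin N → ℝ, eval y F ^ 2 * eval y G = eval y (F * F * G) := fun y => by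
      rw [map_mul, map_mul]; ring
    simp only [e]
    rw [h.integral_eq, map_mul (aeval b), map_mul (aeval b), one_mul, one_mul]
    exact hG _
  obtain ⟨M, hM⟩ := (isCompact_box N c).exists_bound_of_continuousOn hGc.continuousOn
  obtain ⟨R, hR⟩ := (isCompact_box N c).exists_bound_of_continuousOn hφ.continuousOn
  have hpos : 0 ≤ ∫ y, φ y ^ 2 * eval y G ∂ν := by
    refine le_of_forall_pos_le_add fun ε hε => ?_
    let Q := (2 * |R| + 1) * |M| * ν.real Set.univ + 1
    have hQ : 0 < Q := by positivity
    let δ := min 1 (ε / Q)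
    have hδ : 0 < δ := lt_min one_pos (div_pos hε hQ)
    obtain ⟨F, hF⟩ := exists_poly_near c φ hφ hδ
    have h1 := abs_integral_sub_le h.box_null (fun y => eval y F ^ 2 * eval y G)
      (fun y => φ y ^ 2 * eval y G) (((continuous_eval_poly F).pow 2).mul hGc)
      ((hφ.pow 2).mul hGc) (ε := δ * ((2 * |R| + 1) * |M|)) (fun y hy => by
        have e1 : eval y F ^ 2 * eval y G - φ y ^ 2 * eval y G =
          (eval y F - φ y) * ((2 * φ y + (eval y F - φ y)) * eval y G) := by ring
        rw [e1, abs_mul, abs_mul]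
        have a1 := (hF y hy).le
        have a2 := hR y hy
        have a3 := hM y hy
        rw [Real.norm_eq_abs] at a2 a3
        have a4 : |2 * φ y + (eval y F - φ y)| ≤ 2 * |R| + 1 := by
          refine (abs_add_le _ _).trans (add_le_add ?_ (a1.trans (min_le_left _ _)))
          rw [abs_mul, abs_two]
          linarith [le_abs_self R]
        exact mul_le_mul a1 (mul_le_mul a4 (a3.trans (le_abs_self M)) (abs_nonneg _)
          (by positivity)) (by positivity) hδ.le)
    have h2 : δ * ((2 * |R| + 1) * |M|) * ν.real Set.univ ≤ ε := by
      have b1 : δ ≤ ε / Q := min_le_right _ _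
      rw [le_div_iff₀ hQ] at b1
      simp only [Q] at b1
      nlinarith
    have h3 := hpoly F
    have h4 := (abs_le.1 h1).2
    linarith
  have hφ2 : ∀ y, φ y ^ 2 * eval y G = -(max (-eval y G) 0) ^ 2 := by
    intro y
    simp only [φ]
    rw [Real.sq_sqrt (le_max_right _ _)]
    rcases le_total (-eval y G) 0 with h | h
    · simp [max_eq_right h]
    · rw [max_eq_left h]; ring
  simp only [hφ2] at hpos
  rw [integral_neg] at hpos
  have h5 : Continuous fun y : Fin N → ℝ => max (-eval y G) 0 ^ 2 :=
    (hGc.neg.max continuous_const).pow 2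
  have h6 : ∫ y, max (-eval y G) 0 ^ 2 ∂ν = 0 :=
    le_antisymm (by linarith) (integral_nonneg fun y => sq_nonneg _)
  rw [integral_eq_zero_iff_of_nonneg (fun y => sq_nonneg _)
    (integrable_of_box h.box_null _ h5)] at h6
  filter_upwards [h6] with y hy
  have : max (-eval y G) 0 = 0 := by simpa using hy
  have := max_eq_right_iff.1 this
  linarith

end Chart

/-! ### The moment measure -/

/-- The measure is the push-forward under `y ↦ (yᵢ / y₀)` of the measure `ν` on the cube which represents
`L` in the coordinates `y₀ = 1 / w` and `yᵢ = Xᵢ / w`, where `w` is a power of `p`. Homogenization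
expresses `f / d` as a quotient of polynomials in these coordinates. -/
lemma exists_moment_measure
    {n m : ℕ} (D : Submonoid (MvPolynomial (Fin n) ℝ))
    (g : Fin m → MvPolynomial (Fin n) ℝ)
    (p : MvPolynomial (Fin n) ℝ) (hpD : p ∈ D)
    (k : ℕ)
    (hp1 : ∀ x ∈ KS g, 1 ≤ eval x p)
    (hpgrow : ∀ x ∈ KS g, ∑ i, (x i) ^ 2 ≤ (k : ℝ) * eval x p)
    (L : Localization D →ₗ[ℝ] ℝ)
    (hL : ∀ t ∈ genPreordering fun i =>
        algebraMap (MvPolynomial (Fin n) ℝ) (Localization D) (g i), 0 ≤ L t) :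
    ∃ μ : Measure (Fin n → ℝ), IsFiniteMeasure μ ∧
      (∀ d ∈ D, μ (Zset d) = 0) ∧ μ (KS g)ᶜ = 0 ∧
      ∀ (f : MvPolynomial (Fin n) ℝ) (d : D),
        Integrable (fun x => eval x f / eval x (d : MvPolynomial (Fin n) ℝ)) μ ∧
        L (Localization.mk f d) = ∫ x, eval x f / eval x (d : MvPolynomial (Fin n) ℝ) ∂μ := by
  classical
  let E := Localization D
  let φ : MvPolynomial (Fin n) ℝ →ₐ[ℝ] E := Algebra.algHom ℝ _ _
  have hφ : ∀ f, φ f = algebraMap (MvPolynomial (Fin n) ℝ) E f := fun f => rfl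
  have hφX : ∀ f, aeval (fun i => φ (X i)) f = φ f := fun f =>
    (DFunLike.congr_fun (MvPolynomial.aeval_unique φ) f).symm
  let T : Subsemiring E := preord fun i => φ (g i)
  have hsq : ∀ a, a * a ∈ T := mul_self_mem_preord _
  have hLT : ∀ t ∈ T, 0 ≤ L t := fun t ht => hL t (preord_subset_genPreordering _ ht)
  let T₀ : Subsemiring (MvPolynomial (Fin n) ℝ) := T.comap φ.toRingHom
  have hT₀ : ∀ f, f ∈ T₀ ↔ φ f ∈ T := fun f => Iff.rfl
  have hsq₀ : ∀ a, a * a ∈ T₀ := fun a => by rw [hT₀, map_mul]; exact hsq _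
  have hG : ∀ f ∈ Finset.univ.image g, f ∈ T₀ := by
    intro f hf
    obtain ⟨i, _, rfl⟩ := Finset.mem_image.1 hf
    exact mem_preord (fun i => φ (g i)) i
  have hKS : ∀ a, (∀ f ∈ Finset.univ.image g, 0 ≤ eval a f) → a ∈ KS g := fun a ha i =>
    ha _ (Finset.mem_image_of_mem _ (Finset.mem_univ i))
  obtain ⟨s, hs, t, ht, hst⟩ := exists_mul_eq_one_add T₀ hsq₀ _ hG
    (C ((k : ℝ) + 1) * p - ∑ i, X i * X i) (by
      intro a ha
      have h1 := hp1 a (hKS a ha)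
      have h2 := hpgrow a (hKS a ha)
      have : ∑ i, a i * a i = ∑ i, a i ^ 2 := Finset.sum_congr rfl fun i _ => (sq _).symm
      simp only [map_sub, map_mul, eval_C, map_sum, eval_X]
      linarith)
  obtain ⟨s', hs', t', ht', hst'⟩ := exists_mul_eq_one_add T₀ hsq₀ _ hG
    (p - C (1 / 2)) (by
      intro a ha
      have h1 := hp1 a (hKS a ha)
      simp only [map_sub, eval_C]
      linarith)
  have hmk : ∀ (f : MvPolynomial (Fin n) ℝ) (d : D),
      Localization.mk f d * φ d = φ f := fun f d => by
    rw [hφ, hφ, Localization.mk_eq_mk']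
    exact IsLocalization.mk'_spec E f d
  obtain ⟨M, hM0, hM⟩ := exists_bounded_chart T hsq φ p s t s' t' ((k : ℝ) + 1) (by positivity)
    hs ht hs' ht' hst hst' (Localization.mk 1 ⟨p, hpD⟩) (by
      have := hmk 1 ⟨p, hpD⟩
      rwa [map_one] at this)
  set β : E := Localization.mk 1 ⟨p, hpD⟩ ^ (M + 1) with hβ
  let w := p ^ (M + 1)
  have hβw : β * φ w = 1 := by
    have := hmk 1 ⟨p, hpD⟩
    rw [map_one] at this
    rw [hβ, map_pow, ← mul_pow, this, one_pow]
  let b : Fin (n + 1) → E := Fin.cons β fun i => φ (X i) * β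
  have hbB : ∀ j, b j ∈ boundedSub T hsq := fun j => Fin.cases hM0 hM j
  obtain ⟨c, hc⟩ : ∃ c : ℝ, ∀ j, algebraMap ℝ E c - b j ∈ T ∧ algebraMap ℝ E c + b j ∈ T := by
    choose c h1 h2 using hbB
    obtain ⟨c', hc'⟩ := (Set.finite_range c).bddAbove
    refine ⟨c', fun j => ?_⟩
    have hj : 0 ≤ c' - c j := sub_nonneg.2 (hc' ⟨j, rfl⟩)
    have := algebraMap_mem_of_nonneg hsq hj
    rw [map_sub] at this
    constructor
    · convert add_mem (h1 j) this using 1; ring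
    · convert add_mem (h2 j) this using 1; ring
  have hrep := exists_represents T hsq L hLT b c hc
  obtain ⟨ν, hν⟩ := hrep 1
  have hνf := hν.finite
  let π : (Fin (n + 1) → ℝ) → (Fin n → ℝ) := fun y i => y i.succ / y 0
  have hπ : Measurable π := by
    refine measurable_pi_lambda _ fun i => ?_
    exact (measurable_pi_apply _).div (measurable_pi_apply _)
  -- dehomogenization at points off the hyperplane at infinity
  have hdehom : ∀ (f : MvPolynomial (Fin n) ℝ) (j : ℕ) (F : MvPolynomial (Fin (n + 1)) ℝ),
      (∀ (A : Type) [CommRing A] [Algebra ℝ A] (x : Fin n → A) (v : A),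
        aeval (Fin.cons v (fun i => x i * v) : Fin (n + 1) → A) F = v ^ j * aeval x f) →
      ∀ y : Fin (n + 1) → ℝ, y 0 ≠ 0 → eval y F = y 0 ^ j * eval (π y) f := by
    intro f j F hF y hy
    have h1 := hF ℝ (π y) (y 0)
    have h2 : (Fin.cons (y 0) (fun i => π y i * y 0) : Fin (n + 1) → ℝ) = y := by
      funext l
      refine Fin.cases rfl (fun i => ?_) l
      simp [π, hy]
    rw [h2] at h1
    simpa [aeval_eq_eval] using h1
  have hy0 : ∀ᵐ y ∂ν, y 0 ≠ 0 := by
    obtain ⟨ν', hν'⟩ := hrep (1 * φ w)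
    have := hν.zero_null hν' (X 0) (by
      rw [aeval_X, mul_comm]; exact hβw)
    rw [ae_iff]
    simpa using this
  have hkey : ∀ (f : MvPolynomial (Fin n) ℝ) (d : D),
      (∀ᵐ y ∂ν, eval (π y) (d : MvPolynomial (Fin n) ℝ) ≠ 0) ∧
      Integrable (fun y => eval (π y) f / eval (π y) (d : MvPolynomial (Fin n) ℝ)) ν ∧
      L (Localization.mk f d) =
        ∫ y, eval (π y) f / eval (π y) (d : MvPolynomial (Fin n) ℝ) ∂ν := by
    intro f d
    obtain ⟨j₁, h₁⟩ := exists_homogenization (d : MvPolynomial (Fin n) ℝ)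
    obtain ⟨j₂, h₂⟩ := exists_homogenization (f * (d : MvPolynomial (Fin n) ℝ))
    let j := max j₁ j₂
    obtain ⟨P, hP⟩ := h₁ j (le_max_left _ _)
    obtain ⟨F, hF⟩ := h₂ (2 * j) ((le_max_right j₁ j₂).trans (by simp only [j]; omega))
    let u : E := Localization.mk (w ^ j) d
    have hu : u * φ d = φ w ^ j := by rw [hmk, map_pow]
    have hPb : aeval b P = β ^ j * φ d := by
      rw [← hφX]; exact hP E (fun i => φ (X i)) β
    have hFb : aeval b F = β ^ (2 * j) * (φ f * φ d) := by
      rw [← map_mul, ← hφX (f * (d : MvPolynomial (Fin n) ℝ))]; exact hF E (fun i => φ (X i)) β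
    have hβj : β ^ j * φ w ^ j = 1 := by rw [← mul_pow, hβw, one_pow]
    have huP : u * aeval b P = 1 := by
      rw [hPb]; linear_combination β ^ j * hu + hβj
    obtain ⟨ν', hν'⟩ := hrep (1 * u)
    obtain ⟨ν'', hν''⟩ := hrep (1 * u * u)
    have hz := hν.zero_null hν' P huP
    obtain ⟨hint, heq⟩ := hν.integral_div hν' hν'' P huP F
    have hval : 1 * u * (1 * u) * aeval b F = Localization.mk f d := by
      have e1 : Localization.mk f d * φ d = φ f := hmk f d
      rw [hFb]
      have e2 : u * β ^ j * φ d = 1 := by linear_combination β ^ j * hu + hβj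
      linear_combination -(u * β ^ j) ^ 2 * φ d * e1 +
        Localization.mk f d * (u * β ^ j * φ d + 1) * e2
    have hae : (fun y => eval y F / eval y P ^ 2) =ᵐ[ν]
        fun y => eval (π y) f / eval (π y) (d : MvPolynomial (Fin n) ℝ) := by
      filter_upwards [hy0] with y hy
      rw [hdehom _ _ F hF y hy, hdehom _ _ P hP y hy, map_mul]
      by_cases h0 : eval (π y) (d : MvPolynomial (Fin n) ℝ) = 0
      · simp [h0]
      · field_simp
        ring
    refine ⟨?_, hint.congr hae, ?_⟩
    · have : ∀ᵐ y ∂ν, ¬ eval y P = 0 := by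
        rw [ae_iff]; simpa using hz
      filter_upwards [hy0, this] with y hy hPy h0
      exact hPy (by rw [hdehom _ _ P hP y hy, h0, mul_zero])
    · rw [← hval, ← heq]
      exact integral_congr_ae hae
  have hmeas : ∀ f : MvPolynomial (Fin n) ℝ, Measurable fun x : Fin n → ℝ => eval x f :=
    fun f => (continuous_eval_poly f).measurable
  refine ⟨ν.map π, inferInstance, fun d hd => ?_, ?_, fun f d => ?_⟩
  · have hms : MeasurableSet (Zset d) := hmeas d (measurableSet_singleton 0)
    rw [Measure.map_apply hπ hms]
    have := (hkey 1 ⟨d, hd⟩).1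
    rw [ae_iff] at this
    simpa [Zset] using this
  · have : ∀ i, ∀ᵐ x ∂(ν.map π), 0 ≤ eval x (g i) := by
      intro i
      rw [ae_map_iff hπ.aemeasurable (measurableSet_le measurable_const (hmeas _))]
      obtain ⟨j, h⟩ := exists_homogenization (g i)
      obtain ⟨G, hG⟩ := h (2 * j) (by omega)
      have hGb : aeval b G = β ^ j * β ^ j * φ (g i) := by
        rw [← hφX, ← pow_add, ← two_mul]; exact hG E (fun i => φ (X i)) β
      have := hν.ae_nonneg G fun a => hLT _ (mul_mem (hsq a) (by
        rw [hGb]; exact mul_mem (hsq _) (mem_preord (fun i => φ (g i)) i)))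
      filter_upwards [this, hy0] with y h1 h2
      rw [hdehom _ _ G hG y h2, pow_mul] at h1
      exact nonneg_of_mul_nonneg_right h1 (by positivity)
    have h2 := ae_all_iff.2 this
    exact h2
  · obtain ⟨_, h1, h2⟩ := hkey f d
    have hm : AEStronglyMeasurable
        (fun x => eval x f / eval x (d : MvPolynomial (Fin n) ℝ)) (ν.map π) :=
      ((hmeas f).div (hmeas _)).aestronglyMeasurable
    rw [integrable_map_measure hm hπ.aemeasurable, integral_map hπ.aemeasurable hm]
    exact ⟨h1, h2⟩

/-! ### The support of the moment measure -/

lemma exists_eval_lipschitz {n : ℕ} (f : MvPolynomial (Fin n) ℝ) (a : Fin n → ℝ) :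
    ∃ C : ℝ, 0 < C ∧ ∀ x ∈ Metric.closedBall a 1, |eval x f - eval a f| ≤ C * dist x a := by
  induction f using MvPolynomial.induction_on with
  | C r => exact ⟨1, one_pos, fun x _ => by simp⟩
  | add f g hf hg =>
    obtain ⟨C₁, h₁, hf⟩ := hf
    obtain ⟨C₂, h₂, hg⟩ := hg
    refine ⟨C₁ + C₂, by positivity, fun x hx => ?_⟩
    rw [map_add, map_add, add_sub_add_comm, add_mul]
    exact (abs_add_le _ _).trans (add_le_add (hf x hx) (hg x hx))
  | mul_X f i hf =>
    obtain ⟨C₁, h₁, hf⟩ := hf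
    refine ⟨C₁ * (|a i| + 1) + |eval a f|, by positivity, fun x hx => ?_⟩
    have e : eval x (f * X i) - eval a (f * X i) =
        (eval x f - eval a f) * x i + eval a f * (x i - a i) := by
      simp only [map_mul, eval_X]; ring
    have h2 : |x i - a i| ≤ dist x a := dist_le_pi_dist x a i
    have h3 : |x i| ≤ |a i| + 1 := by
      have : dist x a ≤ 1 := hx
      calc |x i| = |a i + (x i - a i)| := by ring_nf
        _ ≤ |a i| + |x i - a i| := abs_add_le _ _
        _ ≤ |a i| + 1 := by linarith
    rw [e]
    refine (abs_add_le _ _).trans ?_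
    rw [abs_mul, abs_mul, add_mul]
    refine add_le_add ?_ (mul_le_mul_of_nonneg_left h2 (abs_nonneg _))
    calc |eval x f - eval a f| * |x i| ≤ (C₁ * dist x a) * (|a i| + 1) :=
          mul_le_mul (hf x hx) h3 (abs_nonneg _) (by positivity)
      _ = _ := by ring

/-- Near a zero `a` of `d`, integrability of `d ^ -(n + 1)` makes `μ` negligible against Lebesgue
measure: by Markov's inequality a ball of radius `r` has measure `O(r ^ (n + 1))`. -/
lemma eventually_measure_closedBall_le {n : ℕ} (μ : Measure (Fin n → ℝ)) [IsFiniteMeasure μ]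
    (d : MvPolynomial (Fin n) ℝ) (hd : μ (Zset d) = 0)
    (hint : Integrable (fun x => 1 / eval x d ^ (n + 1)) μ) (a : Fin n → ℝ) (ha : eval a d = 0)
    (ε : NNReal) (hε : 0 < ε) :
    ∀ᶠ r in nhdsWithin (0 : ℝ) (Set.Ioi 0),
      μ (Metric.closedBall a r) ≤ (ε • volume : Measure (Fin n → ℝ)) (Metric.closedBall a r) := by
  obtain ⟨C, hC, hlip⟩ := exists_eval_lipschitz d a
  let I := ∫ x, |1 / eval x d ^ (n + 1)| ∂μ
  have hI : 0 ≤ I := integral_nonneg fun x => abs_nonneg _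
  let δ : ℝ := min 1 (ε / (I * C ^ (n + 1) + 1))
  have hδ : 0 < δ := lt_min one_pos (by positivity)
  filter_upwards [Ioc_mem_nhdsGT hδ] with r hr
  have hr0 : 0 < r := hr.1
  have hr1 : r ≤ 1 := hr.2.trans (min_le_left _ _)
  have hCr : 0 < (C * r) ^ (n + 1) := by positivity
  have hmarkov := mul_meas_ge_le_integral_of_nonneg (μ := μ)
    (f := fun x => |1 / eval x d ^ (n + 1)|) (Filter.Eventually.of_forall fun x => abs_nonneg _)
    hint.abs (1 / (C * r) ^ (n + 1))
  have hsub : Metric.closedBall a r ⊆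
      {x | 1 / (C * r) ^ (n + 1) ≤ |1 / eval x d ^ (n + 1)|} ∪ Zset d := by
    intro x hx
    by_cases h0 : eval x d = 0
    · exact Or.inr h0
    · left
      have hx' : dist x a ≤ r := hx
      have h1 := hlip x (hx'.trans hr1)
      rw [ha, sub_zero] at h1
      have h2 : |eval x d| ≤ C * r := h1.trans (by gcongr)
      have h3 : 0 < |eval x d| := abs_pos.2 h0
      change 1 / (C * r) ^ (n + 1) ≤ |1 / eval x d ^ (n + 1)|
      rw [abs_div, abs_one, abs_pow]
      gcongr
  have hreal : μ.real (Metric.closedBall a r) ≤ I * (C * r) ^ (n + 1) := by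
    have h1 : μ.real (Metric.closedBall a r) ≤
        μ.real {x | 1 / (C * r) ^ (n + 1) ≤ |1 / eval x d ^ (n + 1)|} := by
      refine (measureReal_mono hsub).trans ((measureReal_union_le _ _).trans ?_)
      simp [measureReal_def, hd]
    rw [div_mul_eq_mul_div, one_mul, div_le_iff₀ hCr] at hmarkov
    exact h1.trans hmarkov
  have hfin : I * (C * r) ^ (n + 1) ≤ ε * (2 * r) ^ n := by
    have h1 : r ≤ ε / (I * C ^ (n + 1) + 1) := hr.2.trans (min_le_right _ _)
    rw [le_div_iff₀ (by positivity)] at h1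
    have h2 : I * C ^ (n + 1) * r ≤ ε := by nlinarith
    have h3 : r ^ n ≤ (2 * r) ^ n := by gcongr; linarith
    calc I * (C * r) ^ (n + 1) = (I * C ^ (n + 1) * r) * r ^ n := by ring
      _ ≤ ε * (2 * r) ^ n := mul_le_mul h2 h3 (by positivity) ε.2
  have e : (ε • volume : Measure (Fin n → ℝ)) (Metric.closedBall a r) =
      ENNReal.ofReal (ε * (2 * r) ^ n) := by
    rw [Measure.smul_apply, Real.volume_pi_closedBall a hr0.le, Fintype.card_fin,
      ENNReal.ofReal_mul ε.coe_nonneg, ENNReal.ofReal_coe_nnreal]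
    rfl
  rw [e, ← ofReal_measureReal]
  exact ENNReal.ofReal_le_ofReal (hreal.trans hfin)

/-- Every point of `K` outside `A = K \ ⋃ Z(d)` is a zero of some `d ∈ D`, near which `μ` is negligible
against Lebesgue measure. As `D` may be uncountable, the null sets `Z(d)` cannot simply be united;
the Besicovitch covering theorem turns the local estimate into `μ (K \ A) = 0`. -/
lemma measure_support {n : ℕ} (D : Submonoid (MvPolynomial (Fin n) ℝ)) (K : Set (Fin n → ℝ))
    (μ : Measure (Fin n → ℝ)) [IsFiniteMeasure μ] (hK : μ Kᶜ = 0)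
    (hZ : ∀ d ∈ D, μ (Zset d) = 0)
    (hint : ∀ d ∈ D, Integrable (fun x => 1 / eval x d) μ) :
    μ (closure (K \ ⋃ d ∈ (D : Set (MvPolynomial (Fin n) ℝ)), Zset d))ᶜ = 0 := by
  set A := K \ ⋃ d ∈ (D : Set (MvPolynomial (Fin n) ℝ)), Zset d
  have hpiece : ∀ R : ℕ, μ ((K \ A) ∩ Metric.closedBall 0 R) = 0 := by
    intro R
    have hle : ∀ ε : NNReal, 0 < ε → μ ((K \ A) ∩ Metric.closedBall 0 R) ≤
        ε * volume (Metric.closedBall (0 : Fin n → ℝ) R) := by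
      intro ε hε
      refine ((Besicovitch.vitaliFamily μ).measure_le_of_frequently_le
        (ε • volume : Measure (Fin n → ℝ)) Measure.AbsolutelyContinuous.rfl _
        fun a ha => ?_).trans ?_
      · obtain ⟨d, hd, hda⟩ : ∃ d ∈ D, eval a d = 0 := by
          by_contra hcon
          push Not at hcon
          refine ha.1.2 ⟨ha.1.1, fun h => ?_⟩
          simp only [Set.mem_iUnion] at h
          obtain ⟨d, hd, h0⟩ := h
          exact hcon d hd h0
        have := eventually_measure_closedBall_le μ d (hZ d hd)
          (by simpa using hint _ (D.pow_mem hd (n + 1))) a hda ε hε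
        exact (Besicovitch.tendsto_filterAt μ a).frequently this.frequently
      · refine (measure_mono Set.inter_subset_right).trans ?_
        rw [Measure.smul_apply]
        rfl
    have hv : volume (Metric.closedBall (0 : Fin n → ℝ) R) ≠ ⊤ :=
      (isCompact_closedBall _ _).measure_lt_top.ne
    by_contra hne
    obtain ⟨ε, hε, hlt⟩ := ENNReal.exists_nnreal_pos_mul_lt hv hne
    exact (hle ε hε).not_gt hlt
  have hdiff : μ (K \ A) = 0 := by
    refine measure_mono_null (fun x hx => ?_) (measure_iUnion_null hpiece)
    obtain ⟨R, hR⟩ := exists_nat_ge (dist x 0)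
    exact Set.mem_iUnion.2 ⟨R, hx, hR⟩
  refine measure_mono_null (fun x hx => ?_) (measure_union_null hK hdiff)
  by_cases hxK : x ∈ K
  · exact Or.inr ⟨hxK, fun h => hx (subset_closure h)⟩
  · exact Or.inl hxK

/-- Solution of the rational moment problem: every linear functional
nonnegative on `T_S^E` is given by integration against a Borel measure supported on
`closure (K_S \ ⋃_{d ∈ D} Z(d))` which gives measure zero to every `Z(d)`, `d ∈ D`. -/
theorem rational_moment_problem
    {n m : ℕ} (D : Submonoid (MvPolynomial (Fin n) ℝ))
    (hD0 : (0 : MvPolynomial (Fin n) ℝ) ∉ D)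
    (g : Fin m → MvPolynomial (Fin n) ℝ)
    (hKne : (KS g).Nonempty)
    (p : MvPolynomial (Fin n) ℝ) (hpD : p ∈ D)
    (k : ℕ) (hk : 1 ≤ k)
    (hp1 : ∀ x ∈ KS g, 1 ≤ eval x p)
    (hpgrow : ∀ x ∈ KS g, ∑ i, (x i) ^ 2 ≤ (k : ℝ) * eval x p)
    (L : Localization D →ₗ[ℝ] ℝ)
    (hL : ∀ t ∈ genPreordering fun i =>
        algebraMap (MvPolynomial (Fin n) ℝ) (Localization D) (g i), 0 ≤ L t) :
    ∃ μ : Measure (Fin n → ℝ),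
      μ (closure (KS g \ ⋃ d ∈ (D : Set (MvPolynomial (Fin n) ℝ)), Zset d))ᶜ = 0 ∧
      (∀ d ∈ D, μ (closure (KS g \ ⋃ d' ∈ (D : Set (MvPolynomial (Fin n) ℝ)), Zset d')
          ∩ Zset d) = 0) ∧
      ∀ (f : MvPolynomial (Fin n) ℝ) (d : D),
        Integrable (fun x => eval x f / eval x (d : MvPolynomial (Fin n) ℝ)) μ ∧
        L (Localization.mk f d)
          = ∫ x in closure (KS g \ ⋃ d' ∈ (D : Set (MvPolynomial (Fin n) ℝ)), Zset d'),
              eval x f / eval x (d : MvPolynomial (Fin n) ℝ) ∂μ := by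
  obtain ⟨μ, hfin, hZ, hK, hμ⟩ := exists_moment_measure D g p hpD k hp1 hpgrow L hL
  have hsupp := measure_support D (KS g) μ hK hZ fun d hd => by
    simpa using (hμ 1 ⟨d, hd⟩).1
  refine ⟨μ, hsupp, fun d hd => measure_mono_null Set.inter_subset_right (hZ d hd), fun f d => ?_⟩
  obtain ⟨h1, h2⟩ := hμ f d
  refine ⟨h1, h2.trans ?_⟩
  have hae : ∀ᵐ x ∂μ, x ∈ closure (KS g \ ⋃ d' ∈ (D : Set (MvPolynomial (Fin n) ℝ)), Zset d') :=
    hsupp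
  rw [Measure.restrict_eq_self_of_ae_mem hae]

end
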